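/- Let D ⊂ ℂⁿ be a bounded α-regular domain and let {D_j} be an increasing sequence of α-regular domains with D_j ⊂ D_{j+1} and D = ⋃_{j=1}^∞ D_j. Let E ⋐ D₁ be relatively compact in D₁ and let ψ be a bounded function on E with sup_E ψ < 0. Then lim_{j→∞} ω*_α(z,E,D_j,ψ) = ω*_α(z,E,D,ψ) for all z ∈ D. -/

import Mathlib

open MeasureTheory Filter Topology Complex Metric

noncomputable section

/-- Complex `n`-space. -/
abbrev Cn (n : ℕ) := Fin n → ℂ

/-- The Wirtinger derivative `∂f/∂z_j` of a (real-differentiable) function `f : ℂⁿ → ℂ`. -/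
noncomputable def wdz {n : ℕ} (j : Fin n) (f : Cn n → ℂ) (z : Cn n) : ℂ :=
  (fderiv ℝ f z (Pi.single j 1) - Complex.I * fderiv ℝ f z (Pi.single j Complex.I)) / 2

/-- The Wirtinger derivative `∂f/∂z̄_j` of a (real-differentiable) function `f : ℂⁿ → ℂ`. -/
noncomputable def wdzbar {n : ℕ} (j : Fin n) (f : Cn n → ℂ) (z : Cn n) : ℂ :=
  (fderiv ℝ f z (Pi.single j 1) + Complex.I * fderiv ℝ f z (Pi.single j Complex.I)) / 2

/-- The square of the Euclidean norm `|z|² = ∑ |z_i|²` on `ℂⁿ`. -/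
noncomputable def sqNorm {n : ℕ} (z : Cn n) : ℝ := ∑ i, Complex.normSq (z i)

/-- A closed, strictly positive differential form `α` of bidegree `(n-1, n-1)` with `C¹`
coefficients on `ℂⁿ`, recorded through its normalized coefficient matrix:  `coeff j k` is
the Hermitian positive-definite matrix `A_{jk}` such that
`dd^c u ∧ α = (∑_{j,k} A_{jk} ∂²u/∂z_j∂z̄_k) dV`.  In these terms closedness of `α`
reads `∑_j ∂A_{jk}/∂z_j = 0` for every `k` (the conjugate identity follows by
Hermitian symmetry). -/
structure AlphaForm (n : ℕ) where
  coeff : Fin n → Fin n → Cn n → ℂ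
  contDiff : ∀ j k, ContDiff ℝ 1 (coeff j k)
  hermitian : ∀ j k z, coeff k j z = starRingEnd ℂ (coeff j k z)
  strictlyPositive : ∀ z : Cn n, ∀ ξ : Fin n → ℂ, ξ ≠ 0 →
    0 < (∑ j, ∑ k, coeff j k z * ξ j * starRingEnd ℂ (ξ k)).re
  closed : ∀ k, ∀ z : Cn n, (∑ j, wdz j (coeff j k) z) = 0

/-- The second order operator `f ↦ ∑_{j,k} A_{jk} ∂²f/∂z_j∂z̄_k` representing the
top-degree form `dd^c f ∧ α` (with respect to Lebesgue measure). -/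
noncomputable def alphaOp {n : ℕ} (A : AlphaForm n) (f : Cn n → ℂ) (z : Cn n) : ℂ :=
  ∑ j, ∑ k, A.coeff j k z * wdzbar k (wdz j f) z

/-- The operator `alphaOp` applied to a real-valued function, returning the real part. -/
noncomputable def alphaOpR {n : ℕ} (A : AlphaForm n) (ω : Cn n → ℝ) (z : Cn n) : ℝ :=
  (alphaOp A (fun w => (ω w : ℂ)) z).re

/-- `u : ℂⁿ → EReal` is `α`-subharmonic on `D`: it is finite-or-`-∞`, strongly upper
semicontinuous on `D`, locally integrable on `D`, and the current `dd^c u ∧ α` is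
positive, i.e. `∫_D u · (α ∧ dd^c ω) ≥ 0` for every nonnegative test function `ω` on `D`. -/
def IsAlphaSubharmonicE {n : ℕ} (A : AlphaForm n) (D : Set (Cn n)) (u : Cn n → EReal) : Prop :=
  (∀ z ∈ D, u z ≠ ⊤) ∧
  UpperSemicontinuousOn u D ∧
  (∀ z₀ ∈ D, ∀ S : Set (Cn n),
      (∃ N ∈ 𝓝 z₀, volume (N \ S) = 0) → Filter.limsup u (𝓝[S] z₀) = u z₀) ∧
  LocallyIntegrableOn (fun z => (u z).toReal) D volume ∧
  ∀ ω : Cn n → ℝ, ContDiff ℝ (⊤ : ℕ∞) ω → HasCompactSupport ω → tsupport ω ⊆ D →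
    (∀ z, 0 ≤ ω z) → 0 ≤ ∫ z in D, (u z).toReal * alphaOpR A ω z

/-- A real-valued function is `α`-subharmonic on `D` if it is so as an `EReal`-valued
function. -/
def IsAlphaSubharmonic {n : ℕ} (A : AlphaForm n) (D : Set (Cn n)) (u : Cn n → ℝ) : Prop :=
  IsAlphaSubharmonicE A D (fun z => (u z : EReal))

/-- `h` is `α`-harmonic on the open set `U`: `dd^c h ∧ α = 0` there, in the sense of
currents. -/
def IsAlphaHarmonicOn {n : ℕ} (A : AlphaForm n) (U : Set (Cn n)) (h : Cn n → ℝ) : Prop :=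
  LocallyIntegrableOn h U volume ∧
  ∀ ω : Cn n → ℝ, ContDiff ℝ (⊤ : ℕ∞) ω → HasCompactSupport ω → tsupport ω ⊆ U →
    (∫ z in U, h z * alphaOpR A ω z) = 0

/-- `u` is strictly `α`-subharmonic on `G`: for every compact subdomain `G' ⋐ G` there is
`ε > 0` with `u - ε|z|²` `α`-subharmonic on `G'`. -/
def IsStrictlyAlphaSubharmonic {n : ℕ} (A : AlphaForm n) (G : Set (Cn n)) (u : Cn n → ℝ) :
    Prop :=
  ∀ G' : Set (Cn n), IsOpen G' → IsCompact (closure G') → closure G' ⊆ G →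
    ∃ ε > (0 : ℝ), IsAlphaSubharmonic A G' (fun z => u z - ε * sqNorm z)

/-- `D` is a bounded `α`-regular domain: a bounded domain carrying a negative
`α`-subharmonic exhaustion `ρ` with boundary limit `0`. -/
def IsAlphaRegularDomain {n : ℕ} (A : AlphaForm n) (D : Set (Cn n)) : Prop :=
  IsOpen D ∧ IsConnected D ∧ Bornology.IsBounded D ∧
  ∃ ρ : Cn n → ℝ, IsAlphaSubharmonic A D ρ ∧ (∀ z ∈ D, ρ z < 0) ∧
    ∀ ζ ∈ frontier D, Filter.Tendsto ρ (𝓝[D] ζ) (𝓝 0)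

/-- `D` is a strongly `α`-regular domain: `D = {ρ < 0}` for some `ρ` which is `C²` and
strictly `α`-subharmonic on a neighborhood `D⁺` of `closure D`. -/
def IsStronglyAlphaRegularDomain {n : ℕ} (A : AlphaForm n) (D : Set (Cn n)) : Prop :=
  IsOpen D ∧ IsConnected D ∧ Bornology.IsBounded D ∧
  ∃ Dp : Set (Cn n), IsOpen Dp ∧ closure D ⊆ Dp ∧
    ∃ ρ : Cn n → ℝ, ContDiffOn ℝ 2 ρ Dp ∧ IsStrictlyAlphaSubharmonic A Dp ρ ∧
      D = {z ∈ Dp | ρ z < 0}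

/-- The class `U(E, D, ψ)` of `α`-subharmonic functions `u` on `D` with `u ≤ ψ` on `E`
and `u < 0` on `D`. -/
def Uclass {n : ℕ} (A : AlphaForm n) (E D : Set (Cn n)) (ψ : Cn n → ℝ) :
    Set (Cn n → ℝ) :=
  {u | IsAlphaSubharmonic A D u ∧ (∀ z ∈ E, u z ≤ ψ z) ∧ ∀ z ∈ D, u z < 0}

/-- The weighted extremal function `ω_α(z, E, D, ψ)`. -/
noncomputable def omegaW {n : ℕ} (A : AlphaForm n) (E D : Set (Cn n)) (ψ : Cn n → ℝ)
    (z : Cn n) : ℝ :=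
  sSup ((fun u : Cn n → ℝ => u z) '' Uclass A E D ψ)

/-- The weighted `α`-subharmonic measure `ω*_α(z, E, D, ψ)`: the upper semicontinuous
regularization of `ω_α(·, E, D, ψ)`. -/
noncomputable def omegaWStar {n : ℕ} (A : AlphaForm n) (E D : Set (Cn n)) (ψ : Cn n → ℝ)
    (z : Cn n) : ℝ :=
  Filter.limsup (omegaW A E D ψ) (𝓝 z)

/-- The (unweighted) extremal function `ω_α(z, E, D)`. -/
noncomputable def omega0 {n : ℕ} (A : AlphaForm n) (E D : Set (Cn n)) : Cn n → ℝ :=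
  omegaW A E D (fun _ => (-1 : ℝ))

/-- The (unweighted) `α`-subharmonic measure `ω*_α(z, E, D)`. -/
noncomputable def omega0Star {n : ℕ} (A : AlphaForm n) (E D : Set (Cn n)) : Cn n → ℝ :=
  omegaWStar A E D (fun _ => (-1 : ℝ))

/-- `S` is `α`-polar in `D`: there is an `α`-subharmonic `ρ` on `D`, not identically
`-∞`, with `ρ = -∞` on `S`. -/
def IsAlphaPolar {n : ℕ} (A : AlphaForm n) (D S : Set (Cn n)) : Prop :=
  ∃ ρ : Cn n → EReal, IsAlphaSubharmonicE A D ρ ∧ (∃ z ∈ D, ρ z ≠ ⊥) ∧ ∀ z ∈ S, ρ z = ⊥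

/-- `u` is plurisubharmonic on `D`: upper semicontinuous, locally integrable, and with
positive semidefinite complex Hessian in the sense of distributions. -/
def IsPlurisubharmonic {n : ℕ} (D : Set (Cn n)) (u : Cn n → ℝ) : Prop :=
  UpperSemicontinuousOn u D ∧ LocallyIntegrableOn u D volume ∧
  ∀ ξ : Fin n → ℂ, ∀ ω : Cn n → ℝ, ContDiff ℝ (⊤ : ℕ∞) ω → HasCompactSupport ω →
    tsupport ω ⊆ D → (∀ z, 0 ≤ ω z) →
    0 ≤ ∫ z in D, u z *
      (∑ j, ∑ k, ξ j * starRingEnd ℂ (ξ k) * wdzbar k (wdz j (fun w => (ω w : ℂ))) z).re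

/-- The class `U(E,D)` for the plurisubharmonic measure. -/
def UclassPsh {n : ℕ} (E D : Set (Cn n)) : Set (Cn n → ℝ) :=
  {u | IsPlurisubharmonic D u ∧ (∀ z ∈ E, u z ≤ -1) ∧ ∀ z ∈ D, u z < 0}

/-- The plurisubharmonic extremal function `ω(z, E, D)`. -/
noncomputable def omegaPsh {n : ℕ} (E D : Set (Cn n)) (z : Cn n) : ℝ :=
  sSup ((fun u : Cn n → ℝ => u z) '' UclassPsh E D)

/-- The plurisubharmonic measure `ω*(z, E, D)`. -/
noncomputable def omegaPshStar {n : ℕ} (E D : Set (Cn n)) (z : Cn n) : ℝ :=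
  Filter.limsup (omegaPsh E D) (𝓝 z)

end

/-!
Gluing. If `v` belongs to `U(E, D, ψ)`, tends to `0` at `∂D`, and exceeds `-ε` off a compact
`K ⊆ D_j`, then every `u` in `U(E, D_j, ψ)` satisfies `u - ε ≤ v` on `D_j \ K`. Hence
`max (u - ε) v` on `D_j`, continued by `v`, lies in `U(E, D, ψ)`, so that
`ω(E, D, ψ) ≤ ω(E, D_j, ψ) ≤ ω(E, D, ψ) + ε` on `D_j`. A multiple of the function defining the
regularity of `D` serves as `v`, and by compactness `K ⊆ D_j` for all large `j`. Locally uniform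
convergence of the extremal functions passes to their upper semicontinuous regularizations.

Maxima. What has to be shown is that the maximum of two weak subsolutions `u`, `v` is a weak
subsolution. Because `α` is closed, `dd^c u ∧ α` is, in real coordinates, an operator
`L = ∑ a i j ∂_i ∂_j` with symmetric positive definite `C¹` coefficients and divergence-free
columns, so `L` is in divergence form. Subtracting constants, one may assume `u, v ≤ -1`.
The maximum is the limit, as `θ → 0`, of the convex, one-homogeneous functions
`(p + q + √(p² + q² - 2 p q cos θ)) / 2`. A mollification `f = u ⋆ k` carries a field
`X i = ∑ j, (u a i j) ⋆ ∂_j k` of nonnegative divergence, and the defect `r = a ∇f - X` is a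
commutator, which tends to `0` in `L¹` by Friedrichs' argument. Since the Hessian of a
one-homogeneous function is degenerate, using `X` in place of `a ∇f` in the chain rule costs no more
than a multiple of `‖r‖ + ‖r‖² / |f|`. For a kernel with `|∇k| ≲ √k / s` at scale `s`, the
Cauchy–Schwarz inequality bounds `‖r‖²` by `|f|` times an average of `|u|`, so that `‖r‖² / |f|` is
equi-integrable and tends to `0` in `L¹` along with `r`.
-/

open scoped ContDiff Convolution ENNReal

section DivergenceForm

variable {V : Type*} [NormedAddCommGroup V] [NormedSpace ℝ V] {ι : Type*} [Fintype ι]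

/-- The divergence of the vector field `∑ i, W i • B i`, for a finite family of directions `B`. -/
noncomputable def divergence (B : ι → V) (W : V → ι → ℝ) (x : V) : ℝ :=
  ∑ i, fderiv ℝ (fun y => W y i) x (B i)

/-- The field `a ∇f`, the gradient being taken along the directions `B`. -/
noncomputable def gradientFlux (B : ι → V) (a : ι → ι → V → ℝ) (f : V → ℝ) (x : V) (i : ι) : ℝ :=
  ∑ j, a i j x * fderiv ℝ f x (B j)

/-- The second order operator `∑ i j, a i j ∂_i ∂_j` along the directions `B`. -/
noncomputable def secondOrderOp (B : ι → V) (a : ι → ι → V → ℝ) (f : V → ℝ) (x : V) : ℝ :=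
  ∑ i, ∑ j, a i j x * fderiv ℝ (fderiv ℝ f) x (B i) (B j)

/-- A symmetric positive definite matrix of `C¹` coefficients whose columns are divergence free,
so that `secondOrderOp B a` is formally self-adjoint and in divergence form. -/
structure IsEllipticCoeff (B : ι → V) (a : ι → ι → V → ℝ) : Prop where
  contDiff : ∀ i j, ContDiff ℝ 1 (a i j)
  symm : ∀ i j x, a i j x = a j i x
  pos : ∀ x (ξ : ι → ℝ), ξ ≠ 0 → 0 < ∑ i, ∑ j, a i j x * ξ i * ξ j
  divergence_eq_zero : ∀ j x, divergence B (fun y i => a i j y) x = 0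

variable {B : ι → V} {a : ι → ι → V → ℝ} {f g φ : V → ℝ}

lemma fderiv_fderiv_apply (hf : ContDiff ℝ 2 f) (x v w : V) :
    fderiv ℝ (fun y => fderiv ℝ f y w) x v = fderiv ℝ (fderiv ℝ f) x v w := by
  have hf' : DifferentiableAt ℝ (fderiv ℝ f) x :=
    (hf.fderiv_right (m := 1) (by norm_num)).differentiable one_ne_zero x
  simp [fderiv_clm_apply hf' (differentiableAt_const w)]

lemma contDiff_fderiv_apply {m : WithTop ℕ∞} (hf : ContDiff ℝ (m + 1) f) (v : V) :
    ContDiff ℝ m (fun x => fderiv ℝ f x v) :=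
  (hf.fderiv_right le_rfl).clm_apply contDiff_const

lemma contDiff_gradientFlux (ha : ∀ i j, ContDiff ℝ 1 (a i j)) (hf : ContDiff ℝ 2 f) (i : ι) :
    ContDiff ℝ 1 (fun x => gradientFlux B a f x i) :=
  ContDiff.sum fun j _ => (ha i j).mul (contDiff_fderiv_apply hf (B j))

lemma divergence_gradientFlux (ha : IsEllipticCoeff B a) (hf : ContDiff ℝ 2 f) (x : V) :
    divergence B (gradientFlux B a f) x = secondOrderOp B a f x := by
  have hfd (j : ι) : DifferentiableAt ℝ (fun y => fderiv ℝ f y (B j)) x :=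
    (contDiff_fderiv_apply hf (B j)).differentiable one_ne_zero x
  have had (i j : ι) : DifferentiableAt ℝ (a i j) x :=
    (ha.contDiff i j).differentiable one_ne_zero x
  have hterm (i : ι) : fderiv ℝ (fun y => gradientFlux B a f y i) x (B i) =
      ∑ j, (a i j x * fderiv ℝ (fderiv ℝ f) x (B i) (B j) +
        fderiv ℝ f x (B j) * fderiv ℝ (a i j) x (B i)) := by
    simp only [gradientFlux]
    rw [fderiv_fun_sum fun j _ => (had i j).fun_mul (hfd j)]
    simp [fderiv_fun_mul (had i _) (hfd _), fderiv_fderiv_apply hf]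
  have hzero : ∑ i, ∑ j, fderiv ℝ f x (B j) * fderiv ℝ (a i j) x (B i) = 0 := by
    rw [Finset.sum_comm]
    simp_rw [← Finset.mul_sum]
    exact Finset.sum_eq_zero fun j _ => mul_eq_zero_of_right _ (ha.divergence_eq_zero j x)
  simp only [divergence, hterm, Finset.sum_add_distrib, hzero, add_zero, secondOrderOp]

lemma sum_gradientFlux_mul_comm (ha : IsEllipticCoeff B a) (f g : V → ℝ) (x : V) :
    ∑ i, gradientFlux B a f x i * fderiv ℝ g x (B i) =
      ∑ i, gradientFlux B a g x i * fderiv ℝ f x (B i) := by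
  simp only [gradientFlux, Finset.sum_mul]
  rw [Finset.sum_comm]
  exact Finset.sum_congr rfl fun i _ => Finset.sum_congr rfl fun j _ => by rw [ha.symm j i]; ring

lemma secondOrderOp_eq_zero_of_notMem_tsupport {x : V} (hx : x ∉ tsupport f) :
    secondOrderOp B a f x = 0 := by
  have hsub := (tsupport_fderiv_subset ℝ (f := fderiv ℝ f)).trans (tsupport_fderiv_subset ℝ)
  have hzero : fderiv ℝ (fderiv ℝ f) x = 0 :=
    image_eq_zero_of_notMem_tsupport fun h => hx (hsub h)
  simp [secondOrderOp, hzero]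

lemma hasCompactSupport_secondOrderOp (hf : HasCompactSupport f) :
    HasCompactSupport (secondOrderOp B a f) :=
  hf.mono' fun _ hx => by_contra fun h => hx (secondOrderOp_eq_zero_of_notMem_tsupport h)

lemma continuous_secondOrderOp (ha : ∀ i j, Continuous (a i j)) (hf : ContDiff ℝ 2 f) :
    Continuous (secondOrderOp B a f) := by
  have hf'' : Continuous (fderiv ℝ (fderiv ℝ f)) :=
    (hf.fderiv_right (m := 1) (by norm_num)).continuous_fderiv one_ne_zero
  exact continuous_finsetSum _ fun i _ => continuous_finsetSum _ fun j _ =>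
    (ha i j).mul ((hf''.clm_apply continuous_const).clm_apply continuous_const)

lemma secondOrderOp_add (hf : ContDiff ℝ 2 f) (hg : ContDiff ℝ 2 g) (x : V) :
    secondOrderOp B a (f + g) x = secondOrderOp B a f x + secondOrderOp B a g x := by
  have hd {h : V → ℝ} (hh : ContDiff ℝ 2 h) : Differentiable ℝ (fderiv ℝ h) :=
    (hh.fderiv_right (m := 1) (by norm_num)).differentiable one_ne_zero
  have hfg : fderiv ℝ (f + g) = fderiv ℝ f + fderiv ℝ g := funext fun y =>
    fderiv_add (hf.differentiable two_ne_zero y) (hg.differentiable two_ne_zero y)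
  simp [secondOrderOp, hfg, fderiv_add (hd hf x) (hd hg x), mul_add, Finset.sum_add_distrib]

variable [FiniteDimensional ℝ V] [MeasurableSpace V] [BorelSpace V] {μ : Measure V}
  [μ.IsAddHaarMeasure]

lemma integral_mul_divergence {W : V → ι → ℝ} (hf : ContDiff ℝ 1 f)
    (hW : ∀ i, ContDiff ℝ 1 fun x => W x i)
    (hc : HasCompactSupport f ∨ ∀ i, HasCompactSupport fun x => W x i) :
    ∫ x, f x * divergence B W x ∂μ = -∫ x, ∑ i, W x i * fderiv ℝ f x (B i) ∂μ := by
  have hf' (i : ι) : Continuous fun x => fderiv ℝ f x (B i) :=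
    (hf.continuous_fderiv one_ne_zero).clm_apply continuous_const
  have hW' (i : ι) : Continuous fun x => fderiv ℝ (fun y => W y i) x (B i) :=
    ((hW i).continuous_fderiv one_ne_zero).clm_apply continuous_const
  have hint₁ (i : ι) : Integrable (fun x => fderiv ℝ f x (B i) * W x i) μ :=
    ((hf' i).mul (hW i).continuous).integrable_of_hasCompactSupport <|
      hc.elim (fun h => (h.fderiv_apply ℝ _).mul_right) fun h => (h i).mul_left
  have hint₂ (i : ι) : Integrable (fun x => f x * fderiv ℝ (fun y => W y i) x (B i)) μ :=
    (hf.continuous.mul (hW' i)).integrable_of_hasCompactSupport <|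
      hc.elim (fun h => h.mul_right) fun h => ((h i).fderiv_apply ℝ _).mul_left
  have hint₃ (i : ι) : Integrable (fun x => f x * W x i) μ :=
    (hf.continuous.mul (hW i).continuous).integrable_of_hasCompactSupport <|
      hc.elim (fun h => h.mul_right) fun h => (h i).mul_left
  have hparts (i : ι) := integral_mul_fderiv_eq_neg_fderiv_mul_of_integrable (hint₁ i) (hint₂ i)
    (hint₃ i) (fun x _ => hf.differentiable one_ne_zero x)
    fun x _ => (hW i).differentiable one_ne_zero x
  simp only [divergence, Finset.mul_sum]
  rw [integral_finsetSum _ fun i _ => hint₂ i,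
    integral_finsetSum _ fun i _ => by simpa only [mul_comm] using hint₁ i,
    ← Finset.sum_neg_distrib]
  exact Finset.sum_congr rfl fun i _ => by simpa only [mul_comm] using hparts i

lemma integral_divergence_eq_zero {W : V → ι → ℝ} (hW : ∀ i, ContDiff ℝ 1 fun x => W x i)
    (hc : ∀ i, HasCompactSupport fun x => W x i) : ∫ x, divergence B W x ∂μ = 0 := by
  simpa using
    integral_mul_divergence (B := B) (μ := μ) (f := fun _ => 1) contDiff_const hW (.inr hc)

lemma integral_mul_secondOrderOp (ha : IsEllipticCoeff B a) (hf : ContDiff ℝ 1 f)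
    (hφ : ContDiff ℝ 2 φ) (hc : HasCompactSupport φ) :
    ∫ x, f x * secondOrderOp B a φ x ∂μ =
      -∫ x, ∑ i, gradientFlux B a f x i * fderiv ℝ φ x (B i) ∂μ := by
  have hsupp (i : ι) : HasCompactSupport fun x => gradientFlux B a φ x i :=
    (hc.fderiv ℝ).mono fun x hx h => hx (by simp [gradientFlux, h])
  simp_rw [← divergence_gradientFlux ha hφ, sum_gradientFlux_mul_comm ha f φ]
  exact integral_mul_divergence hf (contDiff_gradientFlux ha.contDiff hφ) (.inr hsupp)

lemma integral_secondOrderOp_eq_zero (ha : IsEllipticCoeff B a) (hφ : ContDiff ℝ 2 φ)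
    (hc : HasCompactSupport φ) : ∫ x, secondOrderOp B a φ x ∂μ = 0 := by
  simpa [gradientFlux] using
    integral_mul_secondOrderOp (μ := μ) ha (f := fun _ => 1) contDiff_const hφ hc

end DivergenceForm

section SmoothMax

/-- The third side of a triangle with (signed) sides `p`, `q` enclosing the angle `θ`. -/
noncomputable def thirdSide (θ p q : ℝ) : ℝ := √(p ^ 2 + q ^ 2 - 2 * p * q * Real.cos θ)

/-- A regularization of `max p q`, homogeneous of degree one and smooth off the origin; the value
at `θ = 0` is `max p q`. -/
noncomputable def smoothMax (θ p q : ℝ) : ℝ := (p + q + thirdSide θ p q) / 2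

/-- The partial derivative of `smoothMax θ` with respect to the first variable. -/
noncomputable def smoothMaxWeight (θ p q : ℝ) : ℝ :=
  (1 + (p - q * Real.cos θ) / thirdSide θ p q) / 2

variable {θ p q : ℝ}

lemma thirdSide_comm (θ p q : ℝ) : thirdSide θ p q = thirdSide θ q p := by
  simp only [thirdSide]
  ring_nf

lemma thirdSide_nonneg (θ p q : ℝ) : 0 ≤ thirdSide θ p q := Real.sqrt_nonneg _

lemma thirdSide_radicand (θ p q : ℝ) :
    p ^ 2 + q ^ 2 - 2 * p * q * Real.cos θ = (p - q * Real.cos θ) ^ 2 + (q * Real.sin θ) ^ 2 := by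
  linear_combination -q ^ 2 * Real.sin_sq_add_cos_sq θ

lemma thirdSide_sq (θ p q : ℝ) :
    thirdSide θ p q ^ 2 = p ^ 2 + q ^ 2 - 2 * p * q * Real.cos θ :=
  Real.sq_sqrt (by rw [thirdSide_radicand]; positivity)

lemma thirdSide_eq_norm (θ p q : ℝ) : thirdSide θ p q = ‖(p : ℂ) - q * exp (θ * I)‖ := by
  rw [thirdSide, thirdSide_radicand, Complex.norm_def, Complex.normSq_apply]
  simp [Complex.exp_ofReal_mul_I_re, Complex.exp_ofReal_mul_I_im, ← sq]

lemma sin_mul_abs_right_le_thirdSide (hθ : 0 ≤ Real.sin θ) (p q : ℝ) :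
    Real.sin θ * |q| ≤ thirdSide θ p q := by
  refine (sq_le_sq₀ (by positivity) (thirdSide_nonneg θ p q)).1 ?_
  rw [thirdSide_sq, thirdSide_radicand, mul_pow, sq_abs]
  nlinarith [sq_nonneg (p - q * Real.cos θ)]

lemma sin_mul_abs_left_le_thirdSide (hθ : 0 ≤ Real.sin θ) (p q : ℝ) :
    Real.sin θ * |p| ≤ thirdSide θ p q :=
  thirdSide_comm θ q p ▸ sin_mul_abs_right_le_thirdSide hθ q p

lemma thirdSide_pos (hθ : 0 < Real.sin θ) (hq : q ≠ 0) : 0 < thirdSide θ p q :=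
  (mul_pos hθ (abs_pos.2 hq)).trans_le (sin_mul_abs_right_le_thirdSide hθ.le p q)

lemma abs_smoothMax_sub_smoothMax_le (θ p q p' q' : ℝ) :
    |smoothMax θ p q - smoothMax θ p' q'| ≤ |p - p'| + |q - q'| := by
  have hside : |thirdSide θ p q - thirdSide θ p' q'| ≤ |p - p'| + |q - q'| := by
    simp only [thirdSide_eq_norm]
    refine (abs_norm_sub_norm_le _ _).trans ?_
    calc ‖(p - q * exp (θ * I) : ℂ) - (p' - q' * exp (θ * I))‖
        = ‖((p - p' : ℝ) : ℂ) - ((q - q' : ℝ) : ℂ) * exp (θ * I)‖ := by push_cast; ring_nf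
      _ ≤ |p - p'| + |q - q'| := (norm_sub_le _ _).trans_eq <| by
          simp only [norm_mul, Complex.norm_exp_ofReal_mul_I, mul_one, Complex.norm_real,
            Real.norm_eq_abs]
  have hsplit : smoothMax θ p q - smoothMax θ p' q' =
      ((p - p') + (q - q') + (thirdSide θ p q - thirdSide θ p' q')) / 2 := by
    simp only [smoothMax]
    ring
  rw [hsplit, abs_div, abs_two]
  linarith [abs_add_three (p - p') (q - q') (thirdSide θ p q - thirdSide θ p' q')]

lemma abs_smoothMax_sub_max_le (θ p q : ℝ) : |smoothMax θ p q - max p q| ≤ |θ| * |q| := by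
  have hside : |thirdSide θ p q - (|p - q|)| ≤ |θ| * |q| := by
    have habs : |p - q| = ‖(p - q : ℂ)‖ := by rw [← Complex.ofReal_sub, Complex.norm_real]; rfl
    rw [thirdSide_eq_norm, habs]
    refine (abs_norm_sub_norm_le _ _).trans ?_
    calc ‖(p - q * exp (θ * I) : ℂ) - (p - q)‖ = ‖exp (I * θ) - 1‖ * |q| := by
          rw [← Real.norm_eq_abs q, ← Complex.norm_real, ← norm_mul, ← norm_neg]
          ring_nf
      _ ≤ |θ| * |q| := by gcongr; exact Real.norm_exp_I_mul_ofReal_sub_one_le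
  have hsplit : smoothMax θ p q - max p q = (thirdSide θ p q - |p - q|) / 2 := by
    rw [smoothMax, sup_eq_half_smul_add_add_abs_sub ℝ, abs_sub_comm q p,
      smul_eq_mul, invOf_eq_inv]
    ring
  rw [hsplit, abs_div, abs_two]
  linarith [abs_nonneg (thirdSide θ p q - |p - q|)]

lemma smoothMaxWeight_mem_Icc (θ p q : ℝ) : smoothMaxWeight θ p q ∈ Set.Icc 0 1 := by
  have hle : |p - q * Real.cos θ| ≤ thirdSide θ p q :=
    Real.abs_le_sqrt (by rw [thirdSide_radicand]; nlinarith [sq_nonneg (q * Real.sin θ)])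
  have hratio : |(p - q * Real.cos θ) / thirdSide θ p q| ≤ 1 := by
    rw [abs_div, abs_of_nonneg (thirdSide_nonneg θ p q)]
    exact div_le_one_of_le₀ hle (thirdSide_nonneg θ p q)
  obtain ⟨hlow, hup⟩ := abs_le.1 hratio
  rw [smoothMaxWeight]
  constructor <;> linarith

variable {V : Type*} [NormedAddCommGroup V] [NormedSpace ℝ V] {f g : V → ℝ} {x : V}

lemma contDiff_thirdSide {n : WithTop ℕ∞} (hθ : 0 < Real.sin θ) (hf : ContDiff ℝ n f)
    (hg : ContDiff ℝ n g) (hg₀ : ∀ x, g x ≠ 0) :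
    ContDiff ℝ n fun x => thirdSide θ (f x) (g x) :=
  ContDiff.sqrt (by fun_prop) fun x => (Real.sqrt_pos.1 (thirdSide_pos hθ (hg₀ x))).ne'

lemma contDiff_smoothMax {n : WithTop ℕ∞} (hθ : 0 < Real.sin θ) (hf : ContDiff ℝ n f)
    (hg : ContDiff ℝ n g) (hg₀ : ∀ x, g x ≠ 0) :
    ContDiff ℝ n fun x => smoothMax θ (f x) (g x) :=
  ((hf.add hg).add (contDiff_thirdSide hθ hf hg hg₀)).div_const 2

lemma contDiff_smoothMaxWeight {n : WithTop ℕ∞} (hθ : 0 < Real.sin θ) (hf : ContDiff ℝ n f)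
    (hg : ContDiff ℝ n g) (hg₀ : ∀ x, g x ≠ 0) :
    ContDiff ℝ n fun x => smoothMaxWeight θ (f x) (g x) :=
  ((contDiff_const.add ((hf.sub (hg.mul contDiff_const)).div (contDiff_thirdSide hθ hf hg hg₀)
    fun x => (thirdSide_pos hθ (hg₀ x)).ne')).div_const 2)

variable {f' g' : V →L[ℝ] ℝ}

lemma hasFDerivAt_thirdSide (hθ : 0 < Real.sin θ) (hf : HasFDerivAt f f' x)
    (hg : HasFDerivAt g g' x) (hg₀ : g x ≠ 0) :
    HasFDerivAt (fun y => thirdSide θ (f y) (g y)) ((thirdSide θ (f x) (g x))⁻¹ •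
      ((f x - g x * Real.cos θ) • f' + (g x - f x * Real.cos θ) • g')) x := by
  have hrad := (Real.sqrt_pos.1 (thirdSide_pos (p := f x) hθ hg₀)).ne'
  have hderiv := (((hf.pow 2).add (hg.pow 2)).sub
    (((hf.const_mul 2).mul hg).mul_const (Real.cos θ))).sqrt hrad
  refine HasFDerivAt.congr_fderiv hderiv (ContinuousLinearMap.ext fun v => ?_)
  change 1 / (2 * thirdSide θ (f x) (g x)) * _ = _
  simp only [one_div, mul_inv_rev, Nat.add_one_sub_one, pow_one, nsmul_eq_mul, Nat.cast_ofNat,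
    smul_add, ContinuousLinearMap.toLinearMap_sub, ContinuousLinearMap.toLinearMap_add,
    ContinuousLinearMap.toLinearMap_smul, LinearMap.sub_apply, LinearMap.add_apply,
    LinearMap.smul_apply, ContinuousLinearMap.coe_coe, smul_eq_mul, add_apply, smul_apply]
  field_simp
  ring

lemma hasFDerivAt_smoothMax (hθ : 0 < Real.sin θ) (hf : HasFDerivAt f f' x)
    (hg : HasFDerivAt g g' x) (hg₀ : g x ≠ 0) :
    HasFDerivAt (fun y => smoothMax θ (f y) (g y))
      (smoothMaxWeight θ (f x) (g x) • f' + smoothMaxWeight θ (g x) (f x) • g') x := by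
  have hderiv := ((hf.add hg).add (hasFDerivAt_thirdSide hθ hf hg hg₀)).mul_const 2⁻¹
  refine HasFDerivAt.congr_fderiv hderiv (ContinuousLinearMap.ext fun v => ?_)
  simp only [add_apply, smul_apply, smul_eq_mul, smoothMaxWeight, thirdSide_comm θ (g x)]
  ring

/-- Only `g • f' - f • g'` occurs: the Hessian of a one-homogeneous function is degenerate. -/
lemma hasFDerivAt_smoothMaxWeight (hθ : 0 < Real.sin θ) (hf : HasFDerivAt f f' x)
    (hg : HasFDerivAt g g' x) (hg₀ : g x ≠ 0) :
    HasFDerivAt (fun y => smoothMaxWeight θ (f y) (g y))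
      ((Real.sin θ ^ 2 / (2 * thirdSide θ (f x) (g x) ^ 3) * g x) • (g x • f' - f x • g')) x := by
  have hN := (thirdSide_pos (p := f x) hθ hg₀).ne'
  have hinv := (hasDerivAt_inv hN).comp_hasFDerivAt x (hasFDerivAt_thirdSide hθ hf hg hg₀)
  have hderiv := (((hf.sub (hg.mul_const (Real.cos θ))).mul hinv).const_add 1).mul_const 2⁻¹
  refine HasFDerivAt.congr_fderiv hderiv (ContinuousLinearMap.ext fun v => ?_)
  simp only [Pi.sub_apply, Function.comp_apply, add_apply, sub_apply, neg_smul, neg_apply,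
    smul_apply, smul_eq_mul]
  field_simp
  rw [thirdSide_sq, Real.sin_sq]
  ring

end SmoothMax

section FluxSubsolution

variable {V : Type*} [NormedAddCommGroup V] [NormedSpace ℝ V] {ι : Type*} [Fintype ι]

/-- A smooth negative function `f` together with a field `X` of nonnegative divergence on `K`;
one thinks of `X` as an approximation of `a ∇f`, so of `f` as an approximate subsolution. -/
structure IsFluxSubsolution (B : ι → V) (K : Set V) (f : V → ℝ) (X : V → ι → ℝ) : Prop where
  contDiff : ContDiff ℝ 2 f
  neg : ∀ x, f x < 0
  contDiff_flux : ∀ i, ContDiff ℝ 1 fun x => X x i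
  divergence_nonneg : ∀ x ∈ K, 0 ≤ divergence B X x

/-- The amount by which `X` fails to be the flux `a ∇f`. -/
noncomputable def fluxDefect (B : ι → V) (a : ι → ι → V → ℝ) (f : V → ℝ) (X : V → ι → ℝ) (x : V) :
    ι → ℝ :=
  gradientFlux B a f x - X x

/-- The density of the error committed by the pair `(f, X)` in the Kato inequality. -/
noncomputable def fluxError (B : ι → V) (a : ι → ι → V → ℝ) (f : V → ℝ) (X : V → ι → ℝ) (x : V) :
    ℝ :=
  ‖fluxDefect B a f X x‖ + ‖fluxDefect B a f X x‖ ^ 2 / |f x|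

variable {B : ι → V} {a : ι → ι → V → ℝ} {f g φ : V → ℝ} {X Y : V → ι → ℝ} {K : Set V}
  {θ : ℝ} {x : V}

lemma IsEllipticCoeff.exists_coercive_on_isCompact (ha : IsEllipticCoeff B a) (hK : IsCompact K) :
    ∃ c > 0, ∀ x ∈ K, ∀ ξ : ι → ℝ, c * ‖ξ‖ ^ 2 ≤ ∑ i, ∑ j, a i j x * ξ i * ξ j := by
  let Q : V × (ι → ℝ) → ℝ := fun z => ∑ i, ∑ j, a i j z.1 * z.2 i * z.2 j
  have hQ : Continuous Q := continuous_finsetSum _ fun i _ => continuous_finsetSum _ fun j _ =>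
    (((ha.contDiff i j).continuous.comp continuous_fst).mul (by fun_prop)).mul (by fun_prop)
  obtain ⟨c, hc, hcQ⟩ : ∃ c > 0, ∀ z ∈ K ×ˢ Metric.sphere (0 : ι → ℝ) 1, c ≤ Q z := by
    rcases (K ×ˢ Metric.sphere (0 : ι → ℝ) 1).eq_empty_or_nonempty with hempty | hne
    · exact ⟨1, one_pos, by simp [hempty]⟩
    obtain ⟨z, hz, hmin⟩ := (hK.prod (isCompact_sphere 0 1)).exists_isMinOn hne hQ.continuousOn
    refine ⟨Q z, ha.pos _ _ fun h => ?_, fun w hw => hmin hw⟩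
    simpa [h] using hz.2
  refine ⟨c, hc, fun x hx ξ => ?_⟩
  rcases eq_or_ne ξ 0 with rfl | hξ
  · simp
  have hmem : (x, ‖ξ‖⁻¹ • ξ) ∈ K ×ˢ Metric.sphere (0 : ι → ℝ) 1 :=
    ⟨hx, by simp [norm_smul, hξ]⟩
  have hscale : ∑ i, ∑ j, a i j x * ξ i * ξ j = ‖ξ‖ ^ 2 * Q (x, ‖ξ‖⁻¹ • ξ) := by
    have : ‖ξ‖ ≠ 0 := norm_ne_zero_iff.2 hξ
    simp only [Q, Finset.mul_sum, Pi.smul_apply, smul_eq_mul]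
    refine Finset.sum_congr rfl fun i _ => Finset.sum_congr rfl fun j _ => ?_
    field_simp
  rw [hscale, mul_comm]
  gcongr
  exact hcQ _ hmem

lemma abs_sum_mul_le (ξ η : ι → ℝ) : |∑ i, ξ i * η i| ≤ Fintype.card ι * (‖ξ‖ * ‖η‖) := by
  refine (Finset.abs_sum_le_sum_abs _ _).trans ?_
  rw [← nsmul_eq_mul]
  refine Finset.sum_le_card_nsmul _ _ _ fun i _ => ?_
  rw [abs_mul]
  exact mul_le_mul (norm_le_pi_norm ξ i) (norm_le_pi_norm η i) (abs_nonneg _) (norm_nonneg _)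

lemma neg_le_quadratic_sub_linear {A : ι → ι → ℝ} {c : ℝ} (hc : 0 < c) {ξ : ι → ℝ}
    (hA : c * ‖ξ‖ ^ 2 ≤ ∑ i, ∑ j, A i j * ξ i * ξ j) (η : ι → ℝ) :
    -((Fintype.card ι : ℝ) ^ 2 * ‖η‖ ^ 2 / (4 * c)) ≤
      ∑ i, ∑ j, A i j * ξ i * ξ j - ∑ i, ξ i * η i := by
  have hlin := (abs_le.1 (abs_sum_mul_le ξ η)).2
  have hsquare : Fintype.card ι * (‖ξ‖ * ‖η‖) ≤
      c * ‖ξ‖ ^ 2 + (Fintype.card ι : ℝ) ^ 2 * ‖η‖ ^ 2 / (4 * c) := by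
    rw [← sub_nonneg]
    have : c * ‖ξ‖ ^ 2 + (Fintype.card ι : ℝ) ^ 2 * ‖η‖ ^ 2 / (4 * c) -
        Fintype.card ι * (‖ξ‖ * ‖η‖) = c * (‖ξ‖ - Fintype.card ι * ‖η‖ / (2 * c)) ^ 2 := by
      field_simp
      ring
    rw [this]
    positivity
  linarith

/-- The flux of `smoothMax θ f g` built from the fluxes `X` of `f` and `Y` of `g`. -/
noncomputable def smoothMaxFlux (θ : ℝ) (f g : V → ℝ) (X Y : V → ι → ℝ) (x : V) : ι → ℝ :=
  smoothMaxWeight θ (f x) (g x) • X x + smoothMaxWeight θ (g x) (f x) • Y x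

lemma gradientFlux_smoothMax (hθ : 0 < Real.sin θ) (hf : DifferentiableAt ℝ f x)
    (hg : DifferentiableAt ℝ g x) (hg₀ : g x ≠ 0) :
    gradientFlux B a (fun y => smoothMax θ (f y) (g y)) x =
      smoothMaxFlux θ f g (gradientFlux B a f) (gradientFlux B a g) x := by
  funext i
  simp only [gradientFlux, smoothMaxFlux, Pi.add_apply, Pi.smul_apply, smul_eq_mul,
    Finset.mul_sum, ← Finset.sum_add_distrib,
    (hasFDerivAt_smoothMax hθ hf.hasFDerivAt hg.hasFDerivAt hg₀).fderiv]
  exact Finset.sum_congr rfl fun j _ => by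
    simp only [add_apply, smul_apply, smul_eq_mul]
    ring

lemma divergence_smoothMaxFlux (hθ : 0 < Real.sin θ) (hf : DifferentiableAt ℝ f x)
    (hg : DifferentiableAt ℝ g x) (hf₀ : f x ≠ 0) (hg₀ : g x ≠ 0)
    (hX : ∀ i, DifferentiableAt ℝ (fun y => X y i) x)
    (hY : ∀ i, DifferentiableAt ℝ (fun y => Y y i) x) :
    divergence B (smoothMaxFlux θ f g X Y) x =
      smoothMaxWeight θ (f x) (g x) * divergence B X x +
        smoothMaxWeight θ (g x) (f x) * divergence B Y x +
      Real.sin θ ^ 2 / (2 * thirdSide θ (f x) (g x) ^ 3) *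
        ∑ i, (g x * fderiv ℝ f x (B i) - f x * fderiv ℝ g x (B i)) *
          (g x * X x i - f x * Y x i) := by
  have hP := hasFDerivAt_smoothMaxWeight hθ hf.hasFDerivAt hg.hasFDerivAt hg₀
  have hQ := hasFDerivAt_smoothMaxWeight hθ hg.hasFDerivAt hf.hasFDerivAt hf₀
  simp only [divergence, Finset.mul_sum, ← Finset.sum_add_distrib]
  refine Finset.sum_congr rfl fun i _ => ?_
  have hW := ((hP.mul (hX i).hasFDerivAt).add (hQ.mul (hY i).hasFDerivAt)).fderiv
  refine (congrArg (fun T : V →L[ℝ] ℝ => T (B i)) hW).trans ?_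
  simp only [add_apply, sub_apply, smul_apply, smul_eq_mul, thirdSide_comm θ (g x)]
  ring

lemma fluxDefect_smoothMaxFlux (hθ : 0 < Real.sin θ) (hf : DifferentiableAt ℝ f x)
    (hg : DifferentiableAt ℝ g x) (hg₀ : g x ≠ 0) :
    fluxDefect B a (fun y => smoothMax θ (f y) (g y)) (smoothMaxFlux θ f g X Y) x =
      smoothMaxFlux θ f g (fluxDefect B a f X) (fluxDefect B a g Y) x := by
  simp only [fluxDefect, gradientFlux_smoothMax hθ hf hg hg₀, smoothMaxFlux]
  module

lemma norm_smoothMaxWeight_smul_add_le (θ p q : ℝ) (ξ η : ι → ℝ) :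
    ‖smoothMaxWeight θ p q • ξ + smoothMaxWeight θ q p • η‖ ≤ ‖ξ‖ + ‖η‖ := by
  have hle (p q : ℝ) (ξ : ι → ℝ) : ‖smoothMaxWeight θ p q • ξ‖ ≤ ‖ξ‖ := by
    obtain ⟨h₀, h₁⟩ := smoothMaxWeight_mem_Icc θ p q
    rw [norm_smul, Real.norm_of_nonneg h₀]
    exact mul_le_of_le_one_left (norm_nonneg _) h₁
  exact (norm_add_le _ _).trans (add_le_add (hle _ _ _) (hle _ _ _))

/-- The degeneracy of the Hessian of `smoothMax` turns the error term into
`‖r‖² / |p| + ‖t‖² / |q|`, which does not see the ratio of `p` and `q`. -/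
lemma sin_sq_div_mul_sq_norm_le (hθ : 0 < Real.sin θ) {p q : ℝ} (hp : p ≠ 0) (hq : q ≠ 0)
    (r t : ι → ℝ) :
    Real.sin θ ^ 2 / (2 * thirdSide θ p q ^ 3) * ‖q • r - p • t‖ ^ 2 ≤
      (‖r‖ ^ 2 / |p| + ‖t‖ ^ 2 / |q|) / Real.sin θ := by
  have hN := thirdSide_pos (p := p) hθ hq
  have hNp := sin_mul_abs_left_le_thirdSide hθ.le p q
  have hNq := sin_mul_abs_right_le_thirdSide hθ.le p q
  have hp' := abs_pos.2 hp
  have hq' := abs_pos.2 hq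
  have hsq : ‖q • r - p • t‖ ^ 2 ≤ 2 * ((|q| * ‖r‖) ^ 2 + (|p| * ‖t‖) ^ 2) := by
    have hle := norm_sub_le (q • r) (p • t)
    simp only [norm_smul, Real.norm_eq_abs] at hle
    exact (pow_le_pow_left₀ (norm_nonneg _) hle 2).trans (add_sq_le)
  have hterm {u v m : ℝ} (hu : 0 < u) (hv : 0 < v) (huN : Real.sin θ * u ≤ thirdSide θ p q)
      (hvN : Real.sin θ * v ≤ thirdSide θ p q) :
      Real.sin θ ^ 2 / thirdSide θ p q ^ 3 * (v * m) ^ 2 ≤ m ^ 2 / u / Real.sin θ := by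
    have hcube : Real.sin θ * u * (Real.sin θ * v) ^ 2 ≤ thirdSide θ p q ^ 3 := by
      calc _ ≤ thirdSide θ p q * thirdSide θ p q ^ 2 := by gcongr
        _ = _ := by ring
    rw [div_mul_eq_mul_div, div_div, div_le_div_iff₀ (by positivity) (by positivity)]
    nlinarith [mul_le_mul_of_nonneg_left hcube (sq_nonneg m)]
  calc Real.sin θ ^ 2 / (2 * thirdSide θ p q ^ 3) * ‖q • r - p • t‖ ^ 2
      ≤ Real.sin θ ^ 2 / (2 * thirdSide θ p q ^ 3) *
          (2 * ((|q| * ‖r‖) ^ 2 + (|p| * ‖t‖) ^ 2)) := by gcongr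
    _ = Real.sin θ ^ 2 / thirdSide θ p q ^ 3 * (|q| * ‖r‖) ^ 2 +
          Real.sin θ ^ 2 / thirdSide θ p q ^ 3 * (|p| * ‖t‖) ^ 2 := by field_simp
    _ ≤ _ := by rw [add_div]; exact add_le_add (hterm hp' hq' hNp hNq) (hterm hq' hp' hNq hNp)

lemma neg_le_divergence_smoothMaxFlux (hθ : 0 < Real.sin θ) {c : ℝ} (hc : 0 < c)
    (hcoer : ∀ ξ : ι → ℝ, c * ‖ξ‖ ^ 2 ≤ ∑ i, ∑ j, a i j x * ξ i * ξ j)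
    (hf : IsFluxSubsolution B K f X) (hg : IsFluxSubsolution B K g Y) (hx : x ∈ K) :
    -((Fintype.card ι : ℝ) ^ 2 / (4 * c * Real.sin θ) *
      (fluxError B a f X x + fluxError B a g Y x)) ≤ divergence B (smoothMaxFlux θ f g X Y) x := by
  set r := fluxDefect B a f X x
  set t := fluxDefect B a g Y x
  set κ := Real.sin θ ^ 2 / (2 * thirdSide θ (f x) (g x) ^ 3)
  set ξ : ι → ℝ := fun i => g x * fderiv ℝ f x (B i) - f x * fderiv ℝ g x (B i)
  have hκ : 0 ≤ κ := by have := thirdSide_nonneg θ (f x) (g x); positivity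
  have hsum : ∑ i, ξ i * (g x * X x i - f x * Y x i) =
      ∑ i, ∑ j, a i j x * ξ i * ξ j - ∑ i, ξ i * (g x • r - f x • t) i := by
    rw [← Finset.sum_sub_distrib]
    refine Finset.sum_congr rfl fun i _ => ?_
    have hflux : ∑ j, a i j x * ξ i * ξ j =
        ξ i * (g x * gradientFlux B a f x i - f x * gradientFlux B a g x i) := by
      simp only [gradientFlux, Finset.mul_sum, ← Finset.sum_sub_distrib]
      exact Finset.sum_congr rfl fun j _ => by ring
    rw [hflux]
    simp only [r, t, fluxDefect, Pi.sub_apply, Pi.smul_apply, smul_eq_mul]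
    ring
  have hquad := mul_le_mul_of_nonneg_left
    (neg_le_quadratic_sub_linear hc (hcoer ξ) (g x • r - f x • t)) hκ
  have hdefect := sin_sq_div_mul_sq_norm_le hθ (hf.neg x).ne (hg.neg x).ne r t
  have herror : ‖r‖ ^ 2 / |f x| + ‖t‖ ^ 2 / |g x| ≤ fluxError B a f X x + fluxError B a g Y x :=
    add_le_add (le_add_of_nonneg_left (norm_nonneg _)) (le_add_of_nonneg_left (norm_nonneg _))
  have hX := mul_nonneg (smoothMaxWeight_mem_Icc θ (f x) (g x)).1 (hf.divergence_nonneg x hx)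
  have hY := mul_nonneg (smoothMaxWeight_mem_Icc θ (g x) (f x)).1 (hg.divergence_nonneg x hx)
  rw [divergence_smoothMaxFlux hθ (hf.contDiff.differentiable two_ne_zero x)
    (hg.contDiff.differentiable two_ne_zero x) (hf.neg x).ne (hg.neg x).ne
    (fun i => (hf.contDiff_flux i).differentiable one_ne_zero x)
    (fun i => (hg.contDiff_flux i).differentiable one_ne_zero x), hsum]
  have hscaled : κ * ((Fintype.card ι : ℝ) ^ 2 * ‖g x • r - f x • t‖ ^ 2 / (4 * c)) ≤
      (Fintype.card ι : ℝ) ^ 2 / (4 * c * Real.sin θ) *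
        (fluxError B a f X x + fluxError B a g Y x) := by
    calc _ = (Fintype.card ι : ℝ) ^ 2 / (4 * c) * (κ * ‖g x • r - f x • t‖ ^ 2) := by ring
      _ ≤ (Fintype.card ι : ℝ) ^ 2 / (4 * c) *
          ((fluxError B a f X x + fluxError B a g Y x) / Real.sin θ) := by
        gcongr
        exact hdefect.trans (by gcongr)
      _ = _ := by field_simp
  linarith

lemma continuous_divergence (hX : ∀ i, ContDiff ℝ 1 fun x => X x i) :
    Continuous (divergence B X) :=
  continuous_finsetSum _ fun i _ =>
    ((hX i).continuous_fderiv one_ne_zero).clm_apply continuous_const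

lemma continuous_fluxDefect (ha : ∀ i j, Continuous (a i j)) (hf : ContDiff ℝ 1 f)
    (hX : ∀ i, ContDiff ℝ 1 fun x => X x i) : Continuous (fluxDefect B a f X) :=
  continuous_pi fun i => (continuous_finsetSum _ fun j _ => (ha i j).mul
    ((hf.continuous_fderiv one_ne_zero).clm_apply continuous_const)).sub (hX i).continuous

lemma IsFluxSubsolution.continuous_fluxError (ha : IsEllipticCoeff B a)
    (hf : IsFluxSubsolution B K f X) : Continuous (fluxError B a f X) := by
  have hdefect := (continuous_fluxDefect (B := B) (fun i j => (ha.contDiff i j).continuous)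
    (hf.contDiff.of_le one_le_two) hf.contDiff_flux).norm
  exact hdefect.add ((hdefect.pow 2).div hf.contDiff.continuous.abs
    fun x => abs_ne_zero.2 (hf.neg x).ne)

lemma fluxError_nonneg (B : ι → V) (a : ι → ι → V → ℝ) (f : V → ℝ) (X : V → ι → ℝ) (x : V) :
    0 ≤ fluxError B a f X x := by
  simp only [fluxError]
  positivity

lemma neg_le_mul_divergence_sub_sum_fluxDefect (hθ : 0 < Real.sin θ) {c : ℝ} (hc : 0 < c)
    (hcoer : ∀ ξ : ι → ℝ, c * ‖ξ‖ ^ 2 ≤ ∑ i, ∑ j, a i j x * ξ i * ξ j)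
    (hf : IsFluxSubsolution B K f X) (hg : IsFluxSubsolution B K g Y) (hx : x ∈ K)
    {m C C' : ℝ} (hm : m ∈ Set.Icc 0 C) {η : ι → ℝ} (hη : ‖η‖ ≤ C') :
    -((C * ((Fintype.card ι : ℝ) ^ 2 / (4 * c * Real.sin θ)) + Fintype.card ι * C') *
        (fluxError B a f X x + fluxError B a g Y x)) ≤
      m * divergence B (smoothMaxFlux θ f g X Y) x -
        ∑ i, fluxDefect B a (fun x => smoothMax θ (f x) (g x)) (smoothMaxFlux θ f g X Y) x i *
          η i := by
  set e := fluxError B a f X x + fluxError B a g Y x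
  have he : 0 ≤ e := add_nonneg (fluxError_nonneg B a f X x) (fluxError_nonneg B a g Y x)
  have hdiv : -(C * ((Fintype.card ι : ℝ) ^ 2 / (4 * c * Real.sin θ) * e)) ≤
      m * divergence B (smoothMaxFlux θ f g X Y) x := by
    have hκ : 0 ≤ (Fintype.card ι : ℝ) ^ 2 / (4 * c * Real.sin θ) * e := by positivity
    nlinarith [mul_le_mul_of_nonneg_left (neg_le_divergence_smoothMaxFlux hθ hc hcoer hf hg hx)
      hm.1, mul_le_mul_of_nonneg_right hm.2 hκ]
  have hdefect : ‖fluxDefect B a (fun x => smoothMax θ (f x) (g x)) (smoothMaxFlux θ f g X Y) x‖ ≤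
      e := by
    rw [fluxDefect_smoothMaxFlux hθ (hf.contDiff.differentiable two_ne_zero x)
      (hg.contDiff.differentiable two_ne_zero x) (hg.neg x).ne]
    exact (norm_smoothMaxWeight_smul_add_le θ _ _ _ _).trans
      (add_le_add (le_add_of_nonneg_right (by positivity))
        (le_add_of_nonneg_right (by positivity)))
  have hsum := (abs_le.1 (abs_sum_mul_le (fluxDefect B a (fun x => smoothMax θ (f x) (g x))
    (smoothMaxFlux θ f g X Y) x) η)).2
  have hbound := mul_le_mul_of_nonneg_left (mul_le_mul hdefect hη (norm_nonneg _) he)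
    (Nat.cast_nonneg (α := ℝ) (Fintype.card ι))
  linarith

variable [FiniteDimensional ℝ V] [MeasurableSpace V] [BorelSpace V] {μ : Measure V}
  [μ.IsAddHaarMeasure]

lemma integral_mul_secondOrderOp_eq_flux (ha : IsEllipticCoeff B a) (hf : ContDiff ℝ 1 f)
    (hX : ∀ i, ContDiff ℝ 1 fun x => X x i) (hφ : ContDiff ℝ 2 φ) (hc : HasCompactSupport φ) :
    ∫ x, f x * secondOrderOp B a φ x ∂μ =
      ∫ x, (φ x * divergence B X x - ∑ i, fluxDefect B a f X x i * fderiv ℝ φ x (B i)) ∂μ := by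
  have hint {Z : V → ι → ℝ} (hZ : Continuous Z) :
      Integrable (fun x => ∑ i, Z x i * fderiv ℝ φ x (B i)) μ :=
    integrable_finsetSum _ fun i _ => (((continuous_apply i).comp hZ).mul
      (contDiff_fderiv_apply (m := 1) hφ (B i)).continuous).integrable_of_hasCompactSupport
        (hc.fderiv_apply ℝ _).mul_left
  have hflux (x : V) : gradientFlux B a f x = fluxDefect B a f X x + X x := by simp [fluxDefect]
  simp only [integral_mul_secondOrderOp ha hf hφ hc, hflux, Pi.add_apply, add_mul,
    Finset.sum_add_distrib]
  have hdefect :=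
    hint (continuous_fluxDefect (B := B) (fun i j => (ha.contDiff i j).continuous) hf hX)
  have hdiv : Integrable (fun x => φ x * divergence B X x) μ :=
    (hφ.continuous.mul (continuous_divergence hX)).integrable_of_hasCompactSupport hc.mul_right
  rw [integral_add hdefect (hint (continuous_pi fun i => (hX i).continuous)),
    integral_sub hdiv hdefect, integral_mul_divergence (hφ.of_le one_le_two) hX (.inl hc)]
  ring

lemma exists_forall_le_integral_smoothMax_mul_secondOrderOp (ha : IsEllipticCoeff B a)
    (hθ : 0 < Real.sin θ) (hφ : ContDiff ℝ 2 φ) (hc : HasCompactSupport φ) (hφ₀ : ∀ x, 0 ≤ φ x) :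
    ∃ C, ∀ f g : V → ℝ, ∀ X Y : V → ι → ℝ, IsFluxSubsolution B (tsupport φ) f X →
      IsFluxSubsolution B (tsupport φ) g Y →
      -(C * ∫ x in tsupport φ, (fluxError B a f X x + fluxError B a g Y x) ∂μ) ≤
        ∫ x, smoothMax θ (f x) (g x) * secondOrderOp B a φ x ∂μ := by
  obtain ⟨c, hc₀, hcoer⟩ := ha.exists_coercive_on_isCompact hc
  obtain ⟨C, hC⟩ := hc.exists_bound_of_continuous hφ.continuous
  have hφ' : Continuous fun x i => fderiv ℝ φ x (B i) :=
    continuous_pi fun i => (contDiff_fderiv_apply (m := 1) hφ (B i)).continuous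
  obtain ⟨C', hC'⟩ := IsCompact.exists_bound_of_continuousOn hc hφ'.continuousOn
  refine ⟨C * ((Fintype.card ι : ℝ) ^ 2 / (4 * c * Real.sin θ)) + Fintype.card ι * C',
    fun f g X Y hf hg => ?_⟩
  have hf₁ : ContDiff ℝ 1 f := hf.contDiff.of_le one_le_two
  have hg₁ : ContDiff ℝ 1 g := hg.contDiff.of_le one_le_two
  have hF : ContDiff ℝ 1 fun x => smoothMax θ (f x) (g x) :=
    contDiff_smoothMax hθ hf₁ hg₁ fun x => (hg.neg x).ne
  have hW (i : ι) : ContDiff ℝ 1 fun x => smoothMaxFlux θ f g X Y x i :=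
    ((contDiff_smoothMaxWeight hθ hf₁ hg₁ fun x => (hg.neg x).ne).mul (hf.contDiff_flux i)).add
      ((contDiff_smoothMaxWeight hθ hg₁ hf₁ fun x => (hf.neg x).ne).mul (hg.contDiff_flux i))
  have hzero : ∀ x ∉ tsupport φ, φ x * divergence B (smoothMaxFlux θ f g X Y) x -
      ∑ i, fluxDefect B a (fun x => smoothMax θ (f x) (g x)) (smoothMaxFlux θ f g X Y) x i *
        fderiv ℝ φ x (B i) = 0 := fun x hx => by
    have hφx : fderiv ℝ φ x = 0 :=
      image_eq_zero_of_notMem_tsupport fun h => hx (tsupport_fderiv_subset ℝ h)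
    simp [image_eq_zero_of_notMem_tsupport hx, hφx]
  rw [integral_mul_secondOrderOp_eq_flux ha hF hW hφ hc,
    ← setIntegral_eq_integral_of_forall_compl_eq_zero hzero, ← integral_const_mul, ← integral_neg]
  have hdefect := continuous_fluxDefect (B := B) (fun i j => (ha.contDiff i j).continuous) hF hW
  refine setIntegral_mono_on (ContinuousOn.integrableOn_compact hc ?_)
    (ContinuousOn.integrableOn_compact hc ?_) hc.measurableSet fun x hx => ?_
  · exact (((hf.continuous_fluxError ha).add (hg.continuous_fluxError ha)).const_mul _).neg
      |>.continuousOn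
  · exact ((hφ.continuous.mul (continuous_divergence hW)).sub <| continuous_finsetSum _ fun i _ =>
      ((continuous_apply i).comp hdefect).mul ((continuous_apply i).comp hφ')).continuousOn
  · exact neg_le_mul_divergence_sub_sum_fluxDefect hθ hc₀ (hcoer x hx) hf hg hx
      ⟨hφ₀ x, (le_abs_self _).trans (hC x)⟩ (hC' x hx)

end FluxSubsolution

section Translation

variable {V : Type*} [NormedAddCommGroup V] [NormedSpace ℝ V] [FiniteDimensional ℝ V]
  [MeasurableSpace V] [BorelSpace V] {μ : Measure V} [μ.IsAddHaarMeasure] {u : V → ℝ} {K : Set V}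

lemma tendsto_lintegral_enorm_translate_sub (hu : Integrable u μ) :
    Tendsto (fun h => ∫⁻ x, ‖u (h + x) - u x‖ₑ ∂μ) (𝓝 0) (𝓝 0) := by
  let U : Lp ℝ 1 μ := (memLp_one_iff_integrable.2 hu).toLp u
  have : Fact ((1 : ℝ≥0∞) ≠ ⊤) := ⟨ENNReal.one_ne_top⟩
  have hcont : Tendsto (fun h : V => edist (DomAddAct.mk h +ᵥ U) U) (𝓝 0) (𝓝 0) := by
    have : Continuous fun h : V => edist (DomAddAct.mk h +ᵥ U) U :=
      ((DomAddAct.continuous_mk.vadd continuous_const).edist continuous_const)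
    simpa using this.tendsto 0
  refine hcont.congr fun h => ?_
  rw [DomAddAct.mk_vadd_toLp, Lp.edist_toLp_toLp, eLpNorm_one_eq_lintegral_enorm]
  rfl

lemma tendsto_setLIntegral_enorm_translate_sub (hu : LocallyIntegrable u μ) (hK : IsCompact K) :
    Tendsto (fun h => ∫⁻ x in K, ‖u (h + x) - u x‖ₑ ∂μ) (𝓝 0) (𝓝 0) := by
  have hcomp : IsCompact (cthickening 1 K) := hK.cthickening
  refine tendsto_of_tendsto_of_tendsto_of_le_of_le' tendsto_const_nhds
    (tendsto_lintegral_enorm_translate_sub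
      ((hu.integrableOn_isCompact hcomp).integrable_indicator hcomp.measurableSet))
    (Eventually.of_forall fun _ => zero_le) ?_
  filter_upwards [closedBall_mem_nhds (0 : V) one_pos] with h hh
  refine (setLIntegral_mono' hK.measurableSet fun x hx => ?_).trans (setLIntegral_le_lintegral K _)
  have hhx : h + x ∈ cthickening 1 K :=
    mem_cthickening_of_dist_le _ x 1 K hx (by simpa using hh)
  rw [Set.indicator_of_mem hhx, Set.indicator_of_mem (self_subset_cthickening K hx)]

lemma lintegral_enorm_integral_sub_smul_le {E : Type*} [NormedAddCommGroup E] [NormedSpace ℝ E]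
    (hu : Measurable u) (hK : MeasurableSet K) {k : V → V → E} {s C : ℝ} (hs₀ : 0 < s) {η : ℝ≥0∞}
    (hk : ∀ x ∈ K, ∀ y, ‖k x y‖ ≤ C / μ.real (closedBall 0 s))
    (hs : ∀ x ∈ K, ∀ y, s < ‖x - y‖ → k x y = 0)
    (hη : ∀ h ∈ closedBall 0 s, ∫⁻ x in K, ‖u (h + x) - u x‖ₑ ∂μ ≤ η) :
    ∫⁻ x in K, ‖∫ y, (u y - u x) • k x y ∂μ‖ₑ ∂μ ≤ ENNReal.ofReal C * η := by
  have hball : 0 < μ.real (closedBall (0 : V) s) :=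
    ENNReal.toReal_pos (measure_closedBall_pos μ 0 hs₀).ne' measure_closedBall_lt_top.ne
  set c := ENNReal.ofReal (C / μ.real (closedBall (0 : V) s)) with hc
  have hc_mul : c * μ (closedBall 0 s) = ENNReal.ofReal C := by
    rw [hc, ← ofReal_measureReal measure_closedBall_lt_top.ne, ← ENNReal.ofReal_mul' hball.le,
      div_mul_cancel₀ _ hball.ne']
  have hpoint (x : V) (hx : x ∈ K) : ‖∫ y, (u y - u x) • k x y ∂μ‖ₑ ≤
      ∫⁻ h in closedBall 0 s, c * ‖u (h + x) - u x‖ₑ ∂μ := by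
    rw [← lintegral_indicator measurableSet_closedBall]
    refine (enorm_integral_le_lintegral_enorm _).trans ?_
    rw [← lintegral_add_right_eq_self _ x]
    refine lintegral_mono fun h => ?_
    by_cases hh : h ∈ closedBall 0 s
    · rw [Set.indicator_of_mem hh, enorm_smul, mul_comm]
      gcongr
      exact (ofReal_norm _).symm.trans_le (ENNReal.ofReal_le_ofReal (hk x hx _))
    · rw [hs x hx (h + x) (by simpa using hh), smul_zero, enorm_zero]
      exact zero_le
  have hmeas : Measurable (Function.uncurry fun x h => c * ‖u (h + x) - u x‖ₑ) := by
    unfold Function.uncurry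
    fun_prop
  calc ∫⁻ x in K, ‖∫ y, (u y - u x) • k x y ∂μ‖ₑ ∂μ
      ≤ ∫⁻ x in K, ∫⁻ h in closedBall 0 s, c * ‖u (h + x) - u x‖ₑ ∂μ ∂μ :=
        setLIntegral_mono' hK hpoint
    _ = ∫⁻ h in closedBall 0 s, ∫⁻ x in K, c * ‖u (h + x) - u x‖ₑ ∂μ ∂μ :=
        lintegral_lintegral_swap hmeas.aemeasurable
    _ ≤ ∫⁻ _ in closedBall 0 s, c * η ∂μ := by
        refine setLIntegral_mono' measurableSet_closedBall fun h hh => ?_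
        rw [lintegral_const_mul _ (by fun_prop)]
        gcongr
        exact hη h hh
    _ = ENNReal.ofReal C * η := by rw [setLIntegral_const, mul_right_comm, hc_mul]

end Translation

section Mollifier

variable {V : Type*} [NormedAddCommGroup V] [NormedSpace ℝ V] [MeasurableSpace V]

/-- A smooth probability density supported in the ball of radius `s`. Besides the size bounds with
constant `M`, natural at scale `s`, its gradient is controlled by the square root of its value;
this is what makes Cauchy–Schwarz estimates against the density `k` possible. -/
structure IsMollifier (μ : Measure V) (M s : ℝ) (k : V → ℝ) : Prop where
  contDiff : ContDiff ℝ ∞ k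
  nonneg : ∀ z, 0 ≤ k z
  eq_zero : ∀ z, s < ‖z‖ → k z = 0
  integral_eq_one : ∫ z, k z ∂μ = 1
  le : ∀ z, k z ≤ M / μ.real (closedBall 0 s)
  sq_norm_fderiv_le : ∀ z, (s * ‖fderiv ℝ k z‖) ^ 2 ≤ M / μ.real (closedBall 0 s) * k z

lemma IsMollifier.contDiff_two {μ : Measure V} {M s : ℝ} {k : V → ℝ} (hk : IsMollifier μ M s k) :
    ContDiff ℝ 2 k :=
  mod_cast contDiff_infty.1 hk.contDiff 2

variable [FiniteDimensional ℝ V]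

lemma IsMollifier.hasCompactSupport {μ : Measure V} {M s : ℝ} {k : V → ℝ}
    (hk : IsMollifier μ M s k) : HasCompactSupport k :=
  .intro (isCompact_closedBall 0 s) fun z hz => hk.eq_zero z (by simpa using hz)

variable [BorelSpace V]

lemma IsMollifier.rescale {μ : Measure V} [μ.IsAddHaarMeasure] {M : ℝ} {k : V → ℝ}
    (hk : IsMollifier μ M 1 k) {s : ℝ} (hs : 0 < s) :
    IsMollifier μ M s fun z => (s ^ Module.finrank ℝ V)⁻¹ * k (s⁻¹ • z) := by
  let n := Module.finrank ℝ V
  have hvol : M / μ.real (closedBall 0 s) = (s ^ n)⁻¹ * (M / μ.real (closedBall 0 1)) := by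
    rw [Measure.addHaar_real_closedBall' μ 0 hs.le, div_mul_eq_div_div_swap, inv_mul_eq_div]
  have hfderiv (z : V) : fderiv ℝ (fun z => (s ^ n)⁻¹ * k (s⁻¹ • z)) z =
      (s ^ n)⁻¹ • s⁻¹ • fderiv ℝ k (s⁻¹ • z) := by
    have hdiff : DifferentiableAt ℝ (fun z => k (s⁻¹ • z)) z :=
      (hk.contDiff.differentiable (by simp) _).comp z (differentiableAt_id.const_smul s⁻¹)
    rw [fderiv_const_mul hdiff, fderiv_comp_smul]
  refine ⟨contDiff_const.mul (hk.contDiff.comp (contDiff_const_smul s⁻¹)),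
    fun z => mul_nonneg (by positivity) (hk.nonneg _), fun z hz => ?_, ?_, fun z => ?_, fun z => ?_⟩
  · rw [hk.eq_zero, mul_zero]
    rwa [norm_smul, Real.norm_of_nonneg (by positivity), ← div_eq_inv_mul, one_lt_div hs]
  · rw [integral_const_mul, Measure.integral_comp_inv_smul_of_nonneg μ k hs.le, hk.integral_eq_one,
      smul_eq_mul, mul_one, inv_mul_cancel₀ (by positivity)]
  · rw [hvol]
    gcongr
    exact hk.le _
  · have hscale : s * ‖fderiv ℝ (fun z => (s ^ n)⁻¹ * k (s⁻¹ • z)) z‖ =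
        (s ^ n)⁻¹ * (1 * ‖fderiv ℝ k (s⁻¹ • z)‖) := by
      rw [hfderiv, norm_smul, norm_smul, Real.norm_of_nonneg (by positivity),
        Real.norm_of_nonneg (by positivity)]
      field_simp
    rw [hscale, hvol, mul_pow]
    calc _ ≤ ((s ^ n)⁻¹) ^ 2 * (M / μ.real (closedBall 0 1) * k (s⁻¹ • z)) := by
          gcongr
          exact hk.sq_norm_fderiv_le _
      _ = _ := by ring

lemma exists_isMollifier_one (μ : Measure V) [μ.IsAddHaarMeasure] :
    ∃ M k, IsMollifier μ M 1 k := by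
  let ψ : ContDiffBump (0 : V) := ⟨1 / 2, 1, by norm_num, by norm_num⟩
  have hψ : ContDiff ℝ ∞ ψ := ψ.contDiff
  obtain ⟨C, hC⟩ := (ψ.hasCompactSupport.fderiv ℝ).exists_bound_of_continuous
    (hψ.continuous_fderiv (by simp))
  set c := ∫ z, ψ z ^ 2 ∂μ
  have hc : 0 < c := (ψ.continuous.pow 2).integral_pos_of_hasCompactSupport_nonneg_nonzero
    (ψ.hasCompactSupport.comp_left (g := fun t : ℝ => t ^ 2) (by simp)) (fun z => sq_nonneg _)
    (x := 0) (by simp [ψ.one_of_mem_closedBall (mem_closedBall_self ψ.rIn_pos.le)])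
  have hm : 0 < μ.real (closedBall (0 : V) 1) :=
    ENNReal.toReal_pos (measure_closedBall_pos μ 0 one_pos).ne' measure_closedBall_lt_top.ne
  refine ⟨μ.real (closedBall (0 : V) 1) * max c⁻¹ (4 * C ^ 2 / c), fun z => c⁻¹ * ψ z ^ 2,
    contDiff_const.mul (hψ.pow 2), fun z => by positivity, fun z hz => ?_, ?_, fun z => ?_,
    fun z => ?_⟩
  · rw [ψ.zero_of_le_dist (by simpa [ψ] using hz.le)]
    simp
  · rw [integral_const_mul, inv_mul_cancel₀ hc.ne']
  · rw [mul_div_cancel_left₀ _ hm.ne']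
    exact (mul_le_of_le_one_right (by positivity)
      (pow_le_one₀ ψ.nonneg ψ.le_one)).trans (le_max_left _ _)
  · have hfderiv : fderiv ℝ (fun z => c⁻¹ * ψ z ^ 2) z = (c⁻¹ * (2 * ψ z)) • fderiv ℝ ψ z := by
      have hψz : DifferentiableAt ℝ ψ z := hψ.differentiable (by simp) z
      rw [fderiv_const_mul (hψz.fun_pow 2), fderiv_fun_pow 2 hψz, smul_smul]
      simp
    rw [mul_div_cancel_left₀ _ hm.ne', hfderiv, norm_smul, one_mul, mul_pow, Real.norm_eq_abs,
      sq_abs]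
    calc (c⁻¹ * (2 * ψ z)) ^ 2 * ‖fderiv ℝ ψ z‖ ^ 2 ≤ (c⁻¹ * (2 * ψ z)) ^ 2 * C ^ 2 := by
          gcongr
          exact hC z
      _ = 4 * C ^ 2 / c * (c⁻¹ * ψ z ^ 2) := by field_simp; ring
      _ ≤ _ := by gcongr; exact le_max_right _ _

end Mollifier

section Regularization

lemma sq_norm_integral_le {X E : Type*} [MeasurableSpace X] [NormedAddCommGroup E]
    [NormedSpace ℝ E] {μ : Measure X} {F : X → E} {p q : X → ℝ} (hF : Integrable F μ)
    (hp : Integrable p μ) (hq : Integrable q μ) (hp₀ : ∀ x, 0 ≤ p x) (hq₀ : ∀ x, 0 ≤ q x)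
    (h : ∀ x, ‖F x‖ ^ 2 ≤ p x * q x) :
    ‖∫ x, F x ∂μ‖ ^ 2 ≤ (∫ x, p x ∂μ) * ∫ x, q x ∂μ := by
  have hpoint (t : ℝ) (x : X) : 2 * t * ‖F x‖ ≤ t ^ 2 * p x + q x := by
    have hpq : 0 ≤ t ^ 2 * p x + q x := add_nonneg (mul_nonneg (sq_nonneg t) (hp₀ x)) (hq₀ x)
    refine (le_abs_self _).trans (abs_le_of_sq_le_sq ?_ hpq)
    nlinarith [h x, sq_nonneg (t ^ 2 * p x - q x), mul_le_mul_of_nonneg_left (h x) (sq_nonneg t)]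
  have hquad (t : ℝ) : 0 ≤ (∫ x, p x ∂μ) * (t * t) + (-2 * ∫ x, ‖F x‖ ∂μ) * t + ∫ x, q x ∂μ := by
    have := integral_mono (hF.norm.const_mul (2 * t)) ((hp.const_mul (t ^ 2)).add hq) (hpoint t)
    simp only [Pi.add_apply, integral_const_mul, integral_add (hp.const_mul (t ^ 2)) hq] at this
    linarith
  have hdiscrim := discrim_le_zero hquad
  rw [discrim] at hdiscrim
  have hnorm : ‖∫ x, F x ∂μ‖ ^ 2 ≤ (∫ x, ‖F x‖ ∂μ) ^ 2 := by
    gcongr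
    exact norm_integral_le_integral_norm F
  linarith

/-- This is applied to `y = r² / p` with `1 ≤ p` and `r² ≤ p * G`: where `y` is at most `T` it is
controlled by `r`, and elsewhere the excess over `T` is controlled by `w` and `|G - w|`. -/
lemma le_sqrt_mul_add_max_add_abs {y r T G w : ℝ} (hT : 0 ≤ T) (hr : 0 ≤ r) (hyr : y ≤ r ^ 2)
    (hyG : y ≤ G) : y ≤ √T * r + max (w - T) 0 + |G - w| := by
  have hmin : min y T ≤ √T * r := by
    rcases le_total y T with h | h
    · rcases le_total y 0 with hy | hy
      · exact (min_le_left y T).trans (hy.trans (by positivity))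
      · calc min y T ≤ y := min_le_left _ _
          _ = √y * √y := (Real.mul_self_sqrt hy).symm
          _ ≤ √T * r := by
            gcongr
            exact Real.sqrt_le_left hr |>.2 hyr
    · calc min y T ≤ T := min_le_right _ _
        _ = √T * √T := (Real.mul_self_sqrt hT).symm
        _ ≤ √T * r := by
          gcongr
          exact Real.sqrt_le_left hr |>.2 (h.trans hyr)
  have hexcess : y - min y T ≤ max (w - T) 0 + |G - w| := by
    rcases le_total y T with h | h
    · rw [min_eq_left h, sub_self]
      positivity
    · rw [min_eq_right h]
      linarith [le_max_left (w - T) 0, le_abs_self (G - w)]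
  linarith

variable {V : Type*} [NormedAddCommGroup V] [NormedSpace ℝ V] {ι : Type*} [Fintype ι]

/-- The kernel of the commutator between multiplication by `a` and convolution with `∇k`, through
which the mollified flux of a function differs from the flux of the mollified function. -/
noncomputable def fluxCommutator (B : ι → V) (a : ι → ι → V → ℝ) (k : V → ℝ) (x y : V) (i : ι) :
    ℝ :=
  ∑ j, (a i j x - a i j y) * fderiv ℝ k (x - y) (B j)

variable {B : ι → V} {a : ι → ι → V → ℝ} {k u : V → ℝ} {K : Set V}

lemma fderiv_comp_const_sub {F : Type*} [NormedAddCommGroup F] [NormedSpace ℝ F] (f : V → F)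
    (x y : V) : fderiv ℝ (fun y => f (x - y)) y = -fderiv ℝ f (x - y) := by
  have := fderiv_comp_smul (f := fun z => f (x + z)) (x := y) (-1 : ℝ)
  simpa only [neg_one_smul, fderiv_comp_add_left, ← sub_eq_add_neg] using this

lemma secondOrderOp_comp_const_sub (x y : V) :
    secondOrderOp B a (fun y => k (x - y)) y =
      ∑ i, ∑ j, a i j y * fderiv ℝ (fderiv ℝ k) (x - y) (B i) (B j) := by
  have h : fderiv ℝ (fun y => k (x - y)) = fun y => -fderiv ℝ k (x - y) :=
    funext (fderiv_comp_const_sub k x)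
  simp [secondOrderOp, h, fderiv_fun_neg, fderiv_comp_const_sub]

lemma exists_norm_fluxCommutator_le [ProperSpace V] (ha : ∀ i j, ContDiff ℝ 1 (a i j))
    (hK : IsCompact K) :
    ∃ Λ, 0 ≤ Λ ∧ ∀ (k : V → ℝ), ∀ x ∈ K, ∀ y, ‖x - y‖ ≤ 1 →
      ‖fluxCommutator B a k x y‖ ≤ Λ * (‖x - y‖ * ‖fderiv ℝ k (x - y)‖) := by
  have hmatrix : ContDiff ℝ 1 fun x i j => a i j x :=
    contDiff_pi.2 fun i => contDiff_pi.2 fun j => ha i j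
  obtain ⟨L, hL⟩ := (hmatrix.locallyLipschitz.locallyLipschitzOn
    (s := cthickening 1 K)).exists_lipschitzOnWith_of_compact hK.cthickening
  refine ⟨L * ∑ j, ‖B j‖, by positivity, fun k x hx y hxy => ?_⟩
  have ha_sub (i j : ι) : |a i j x - a i j y| ≤ L * ‖x - y‖ := by
    have hy : y ∈ cthickening 1 K :=
      mem_cthickening_of_dist_le y x 1 K hx (by rwa [dist_comm, dist_eq_norm])
    rw [← dist_eq_norm, ← Real.dist_eq]
    exact (dist_le_pi_dist _ _ j).trans ((dist_le_pi_dist _ _ i).trans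
      (hL.dist_le_mul x (self_subset_cthickening K hx) y hy))
  refine (pi_norm_le_iff_of_nonneg (by positivity)).2 fun i => ?_
  calc ‖fluxCommutator B a k x y i‖
      ≤ ∑ j, |a i j x - a i j y| * ‖fderiv ℝ k (x - y) (B j)‖ := by
        refine (norm_sum_le _ _).trans_eq ?_
        simp only [norm_mul, Real.norm_eq_abs]
    _ ≤ ∑ j, L * ‖x - y‖ * (‖fderiv ℝ k (x - y)‖ * ‖B j‖) := by
        gcongr with j
        · exact ha_sub i j
        · exact (fderiv ℝ k (x - y)).le_opNorm (B j)
    _ = L * (∑ j, ‖B j‖) * (‖x - y‖ * ‖fderiv ℝ k (x - y)‖) := by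
        rw [Finset.mul_sum, Finset.sum_mul]
        exact Finset.sum_congr rfl fun j _ => by ring

lemma continuous_fluxCommutator (ha : ∀ i j, ContDiff ℝ 1 (a i j)) (hk : ContDiff ℝ 1 k) (x : V) :
    Continuous (fluxCommutator B a k x) :=
  continuous_pi fun i => continuous_finsetSum _ fun j _ =>
    (continuous_const.sub (ha i j).continuous).mul
      (((hk.continuous_fderiv one_ne_zero).comp (continuous_const.sub continuous_id)).clm_apply
        continuous_const)

lemma divergence_fluxCommutator (ha : IsEllipticCoeff B a) (hk : ContDiff ℝ 1 k) (x y : V)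
    (i : ι) :
    divergence B (fun y j => (a i j x - a i j y) * k (x - y)) y = -fluxCommutator B a k x y i := by
  have hka : DifferentiableAt ℝ (fun y => k (x - y)) y :=
    (hk.differentiable one_ne_zero _).comp y ((differentiableAt_const x).sub differentiableAt_id)
  have had (j : ι) : DifferentiableAt ℝ (fun y => a i j x - a i j y) y :=
    (differentiableAt_const _).sub ((ha.contDiff i j).differentiable one_ne_zero y)
  have hzero : ∑ j, fderiv ℝ (a i j) y (B j) = 0 := by
    rw [← ha.divergence_eq_zero i y]
    exact Finset.sum_congr rfl fun j _ => by rw [funext (ha.symm i j)]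
  have hterm (j : ι) : fderiv ℝ (fun y => (a i j x - a i j y) * k (x - y)) y (B j) =
      -((a i j x - a i j y) * fderiv ℝ k (x - y) (B j)) - k (x - y) * fderiv ℝ (a i j) y (B j) := by
    rw [fderiv_fun_mul (had j) hka, fderiv_comp_const_sub, fderiv_const_sub]
    simp
    ring
  rw [divergence, Finset.sum_congr rfl fun j _ => hterm j, Finset.sum_sub_distrib,
    ← Finset.mul_sum, hzero, mul_zero, sub_zero, Finset.sum_neg_distrib, fluxCommutator]

lemma hasCompactSupport_fluxCommutator (hk : HasCompactSupport k) (x : V) :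
    HasCompactSupport (fluxCommutator B a k x) := by
  have hcomp : HasCompactSupport fun y => fderiv ℝ k (x - y) :=
    (hk.fderiv ℝ).comp_homeomorph (Homeomorph.subLeft x)
  exact hcomp.mono fun y hy h => hy (funext fun i => by simp [fluxCommutator, h])

/-- A nonnegative test function with support in `Ω`. -/
structure IsTestFunction (Ω : Set V) (φ : V → ℝ) : Prop where
  contDiff : ContDiff ℝ ∞ φ
  hasCompactSupport : HasCompactSupport φ
  tsupport_subset : tsupport φ ⊆ Ω
  nonneg : ∀ x, 0 ≤ φ x

variable [MeasurableSpace V] {μ : Measure V} {M s : ℝ} {Ω : Set V}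

/-- `u` satisfies `∑ i j, a i j ∂_i ∂_j u ≥ 0` on `Ω` in the sense of distributions, for the
formally self-adjoint operator `secondOrderOp B a`. -/
def IsWeakSubsolution (μ : Measure V) (B : ι → V) (a : ι → ι → V → ℝ) (Ω : Set V) (u : V → ℝ) :
    Prop :=
  ∀ φ, IsTestFunction Ω φ → 0 ≤ ∫ x, u x * secondOrderOp B a φ x ∂μ

lemma IsMollifier.fderiv_eq_zero (hk : IsMollifier μ M s k) {z : V} (hz : s < ‖z‖) :
    fderiv ℝ k z = 0 := by
  have : k =ᶠ[𝓝 z] fun _ => 0 :=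
    (continuous_norm.continuousAt.eventually (lt_mem_nhds hz)).mono hk.eq_zero
  rw [this.fderiv_eq, fderiv_fun_const, Pi.zero_apply]

variable {Λ : ℝ} {x : V}

lemma IsMollifier.fluxCommutator_eq_zero (hk : IsMollifier μ M s k) {y : V} (hy : s < ‖x - y‖) :
    fluxCommutator B a k x y = 0 := by
  ext i
  simp [fluxCommutator, hk.fderiv_eq_zero hy]

lemma IsMollifier.sq_norm_fluxCommutator_le (hk : IsMollifier μ M s k) (hs : s ≤ 1)
    (hΛ : ∀ y, ‖x - y‖ ≤ 1 →
      ‖fluxCommutator B a k x y‖ ≤ Λ * (‖x - y‖ * ‖fderiv ℝ k (x - y)‖)) (y : V) :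
    ‖fluxCommutator B a k x y‖ ^ 2 ≤ Λ ^ 2 * (M / μ.real (closedBall 0 s) * k (x - y)) := by
  rcases le_or_gt ‖x - y‖ s with hy | hy
  · calc ‖fluxCommutator B a k x y‖ ^ 2 ≤ (Λ * (‖x - y‖ * ‖fderiv ℝ k (x - y)‖)) ^ 2 := by
          gcongr
          exact hΛ y (hy.trans hs)
      _ = Λ ^ 2 * (‖x - y‖ * ‖fderiv ℝ k (x - y)‖) ^ 2 := mul_pow ..
      _ ≤ Λ ^ 2 * (s * ‖fderiv ℝ k (x - y)‖) ^ 2 := by gcongr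
      _ ≤ _ := by
          gcongr
          exact hk.sq_norm_fderiv_le _
  · rw [hk.fluxCommutator_eq_zero hy, hk.eq_zero _ hy]
    simp

lemma IsMollifier.norm_fluxCommutator_le (hk : IsMollifier μ M s k) (hs : s ≤ 1) (hΛ₀ : 0 ≤ Λ)
    (hΛ : ∀ y, ‖x - y‖ ≤ 1 →
      ‖fluxCommutator B a k x y‖ ≤ Λ * (‖x - y‖ * ‖fderiv ℝ k (x - y)‖)) (y : V) :
    ‖fluxCommutator B a k x y‖ ≤ Λ * (M / μ.real (closedBall 0 s)) := by
  have hm : 0 ≤ M / μ.real (closedBall (0 : V) s) := (hk.nonneg 0).trans (hk.le 0)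
  refine le_of_sq_le_sq ?_ (by positivity)
  calc ‖fluxCommutator B a k x y‖ ^ 2 ≤ Λ ^ 2 * (M / μ.real (closedBall 0 s) * k (x - y)) :=
        hk.sq_norm_fluxCommutator_le hs hΛ y
    _ ≤ Λ ^ 2 * (M / μ.real (closedBall 0 s) * (M / μ.real (closedBall 0 s))) := by
        gcongr
        exact hk.le _
    _ = (Λ * (M / μ.real (closedBall 0 s))) ^ 2 := by ring

variable [FiniteDimensional ℝ V]

lemma IsMollifier.isTestFunction (hk : IsMollifier μ M s k) {x : V} (hx : closedBall x s ⊆ Ω) :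
    IsTestFunction Ω fun y => k (x - y) where
  contDiff := hk.contDiff.comp (contDiff_const.sub contDiff_id)
  hasCompactSupport := hk.hasCompactSupport.comp_homeomorph (Homeomorph.subLeft x)
  tsupport_subset := by
    refine (closure_minimal (fun y hy => ?_) isClosed_closedBall).trans hx
    by_contra hxy
    exact hy (hk.eq_zero _ (by simpa [dist_eq_norm, norm_sub_rev] using hxy))
  nonneg _ := hk.nonneg _

variable [BorelSpace V]

lemma integral_fluxCommutator_eq_zero [μ.IsAddHaarMeasure] (ha : IsEllipticCoeff B a)
    (hk : ContDiff ℝ 1 k) (hc : HasCompactSupport k) (x : V) :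
    ∫ y, fluxCommutator B a k x y ∂μ = 0 := by
  have hkx : HasCompactSupport fun y => k (x - y) := hc.comp_homeomorph (Homeomorph.subLeft x)
  ext i
  have hdiv := integral_divergence_eq_zero (B := B) (μ := μ)
    (W := fun y j => (a i j x - a i j y) * k (x - y))
    (fun j => (contDiff_const.sub (ha.contDiff i j)).mul
      (hk.comp (contDiff_const.sub contDiff_id)))
    fun j => hkx.mul_left
  simp_rw [divergence_fluxCommutator ha hk, integral_neg, neg_eq_zero] at hdiv
  rw [eval_integral fun i => ?_, hdiv, Pi.zero_apply]
  exact ((continuous_apply i).comp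
    (continuous_fluxCommutator ha.contDiff hk x)).integrable_of_hasCompactSupport
    ((hasCompactSupport_fluxCommutator hc x).comp_left (g := fun ξ : ι → ℝ => ξ i) rfl)

lemma fderiv_convolution_apply [μ.IsAddHaarMeasure] (hu : LocallyIntegrable u μ)
    (hk : ContDiff ℝ 1 k) (hc : HasCompactSupport k) (x v : V) :
    fderiv ℝ (u ⋆[ContinuousLinearMap.mul ℝ ℝ, μ] k) x v =
      (u ⋆[ContinuousLinearMap.mul ℝ ℝ, μ] fun z => fderiv ℝ k z v) x := by
  rw [(hc.hasFDerivAt_convolution_right _ hu hk x).fderiv,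
    convolution_precompR_apply _ hu (hc.fderiv ℝ) (hk.continuous_fderiv one_ne_zero)]

/-- The field `∑ j, (u a i j) * ∂_j k`, a regularization of the distribution `a ∇u`. -/
noncomputable def mollifiedFlux (μ : Measure V) (B : ι → V) (a : ι → ι → V → ℝ) (k u : V → ℝ)
    (x : V) (i : ι) : ℝ :=
  ∑ j, ((fun y => u y * a i j y) ⋆[ContinuousLinearMap.mul ℝ ℝ, μ] fun z => fderiv ℝ k z (B j)) x

lemma contDiff_mollifiedFlux (ha : ∀ i j, Continuous (a i j)) (hu : LocallyIntegrable u μ)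
    (hk : ContDiff ℝ 2 k) (hc : HasCompactSupport k) (i : ι) :
    ContDiff ℝ 1 fun x => mollifiedFlux μ B a k u x i :=
  ContDiff.sum fun j _ => (hc.fderiv_apply ℝ (B j)).contDiff_convolution_right (n := 1) _
    (hu.mul_continuous (ha i j)) (contDiff_fderiv_apply hk (B j))

lemma divergence_mollifiedFlux [μ.IsAddHaarMeasure] (ha : ∀ i j, Continuous (a i j))
    (hu : LocallyIntegrable u μ) (hk : ContDiff ℝ 2 k) (hc : HasCompactSupport k) (x : V) :
    divergence B (mollifiedFlux μ B a k u) x =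
      ∫ y, u y * secondOrderOp B a (fun y => k (x - y)) y ∂μ := by
  have hDk (j : ι) : ContDiff ℝ 1 fun z => fderiv ℝ k z (B j) := contDiff_fderiv_apply hk (B j)
  have hua (i j : ι) : LocallyIntegrable (fun y => u y * a i j y) μ := hu.mul_continuous (ha i j)
  have hcD (j : ι) : HasCompactSupport fun z => fderiv ℝ k z (B j) := hc.fderiv_apply ℝ (B j)
  have hint (i j : ι) : Integrable
      (fun y => u y * a i j y * fderiv ℝ (fderiv ℝ k) (x - y) (B i) (B j)) μ := by
    have := ((hcD j).fderiv_apply ℝ (B i)).convolutionExists_right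
      (ContinuousLinearMap.mul ℝ ℝ) (hua i j) (((hDk j).continuous_fderiv one_ne_zero).clm_apply
        continuous_const) x
    simpa only [ConvolutionExistsAt, ContinuousLinearMap.mul_apply', fderiv_fderiv_apply hk] using
      this
  have hterm (i j : ι) : fderiv ℝ ((fun y => u y * a i j y) ⋆[ContinuousLinearMap.mul ℝ ℝ, μ]
      fun z => fderiv ℝ k z (B j)) x (B i) =
      ∫ y, u y * a i j y * fderiv ℝ (fderiv ℝ k) (x - y) (B i) (B j) ∂μ := by
    rw [fderiv_convolution_apply (hua i j) (hDk j) (hcD j), convolution_mul]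
    simp only [fderiv_fderiv_apply hk]
  have hdiff (i j : ι) : DifferentiableAt ℝ ((fun y => u y * a i j y)
      ⋆[ContinuousLinearMap.mul ℝ ℝ, μ] fun z => fderiv ℝ k z (B j)) x :=
    ((hcD j).hasFDerivAt_convolution_right _ (hua i j) (hDk j) x).differentiableAt
  simp only [divergence, mollifiedFlux]
  simp_rw [fderiv_fun_sum fun j _ => hdiff _ j, sum_apply, hterm]
  simp_rw [← integral_finsetSum _ fun j _ => hint _ j]
  rw [← integral_finsetSum _ fun i _ => integrable_finsetSum _ fun j _ => hint i j]
  simp only [secondOrderOp_comp_const_sub, Finset.mul_sum, mul_assoc]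

lemma fluxDefect_mollifiedFlux [μ.IsAddHaarMeasure] (ha : ∀ i j, ContDiff ℝ 1 (a i j))
    (hu : LocallyIntegrable u μ) (hk : ContDiff ℝ 1 k) (hc : HasCompactSupport k) (x : V) :
    fluxDefect B a (u ⋆[ContinuousLinearMap.mul ℝ ℝ, μ] k) (mollifiedFlux μ B a k u) x =
      ∫ y, u y • fluxCommutator B a k x y ∂μ := by
  have hDk (j : ι) : Continuous fun z => fderiv ℝ k z (B j) :=
    (hk.continuous_fderiv one_ne_zero).clm_apply continuous_const
  have hint₁ (j : ι) : Integrable (fun y => u y * fderiv ℝ k (x - y) (B j)) μ :=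
    (hc.fderiv_apply ℝ (B j)).convolutionExists_right (ContinuousLinearMap.mul ℝ ℝ) hu (hDk j) x
  have hint₂ (i j : ι) : Integrable (fun y => u y * a i j y * fderiv ℝ k (x - y) (B j)) μ :=
    (hc.fderiv_apply ℝ (B j)).convolutionExists_right (ContinuousLinearMap.mul ℝ ℝ)
      (hu.mul_continuous (ha i j).continuous) (hDk j) x
  have hint : Integrable (fun y => u y • fluxCommutator B a k x y) μ :=
    hu.integrable_smul_right_of_hasCompactSupport (continuous_fluxCommutator ha hk x)
      (hasCompactSupport_fluxCommutator hc x)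
  ext i
  rw [eval_integral (fun i => hint.eval i)]
  simp only [fluxDefect, gradientFlux, mollifiedFlux, fderiv_convolution_apply hu hk hc,
    convolution_mul, Pi.sub_apply, ← integral_const_mul, ← Finset.sum_sub_distrib]
  simp_rw [← integral_sub ((hint₁ _).const_mul _) (hint₂ i _)]
  have hsub (j : ι) : Integrable (fun y => a i j x * (u y * fderiv ℝ k (x - y) (B j)) -
      u y * a i j y * fderiv ℝ k (x - y) (B j)) μ := ((hint₁ j).const_mul _).sub (hint₂ i j)
  rw [← integral_finsetSum _ fun j _ => hsub j]
  refine integral_congr_ae (Eventually.of_forall fun y => ?_)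
  simp only [fluxCommutator, Pi.smul_apply, smul_eq_mul, Finset.mul_sum]
  exact Finset.sum_congr rfl fun j _ => by ring

lemma IsMollifier.convolution_le_neg_one [μ.IsAddHaarMeasure] (hk : IsMollifier μ M s k)
    (hu : LocallyIntegrable u μ) (hu₁ : ∀ x, u x ≤ -1) (x : V) :
    (u ⋆[ContinuousLinearMap.mul ℝ ℝ, μ] k) x ≤ -1 := by
  have hkint : Integrable (fun y => k (x - y)) μ :=
    (hk.contDiff.continuous.integrable_of_hasCompactSupport hk.hasCompactSupport).comp_sub_left x
  calc (u ⋆[ContinuousLinearMap.mul ℝ ℝ, μ] k) x = ∫ y, u y * k (x - y) ∂μ := convolution_mul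
    _ ≤ ∫ y, -k (x - y) ∂μ := by
        refine integral_mono (hk.hasCompactSupport.convolutionExists_right
          (ContinuousLinearMap.mul ℝ ℝ) hu hk.contDiff.continuous x) hkint.neg fun y => ?_
        simpa using mul_le_mul_of_nonneg_right (hu₁ y) (hk.nonneg (x - y))
    _ = -1 := by rw [integral_neg, integral_sub_left_eq_self k μ x, hk.integral_eq_one]

lemma IsWeakSubsolution.isFluxSubsolution_convolution [μ.IsAddHaarMeasure]
    (hsub : IsWeakSubsolution μ B a Ω u) (ha : ∀ i j, Continuous (a i j))
    (hu : LocallyIntegrable u μ) (hu₁ : ∀ x, u x ≤ -1) (hk : IsMollifier μ M s k)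
    (hK : cthickening s K ⊆ Ω) :
    IsFluxSubsolution B K (u ⋆[ContinuousLinearMap.mul ℝ ℝ, μ] k) (mollifiedFlux μ B a k u) where
  contDiff := hk.hasCompactSupport.contDiff_convolution_right (n := 2) _ hu
    hk.contDiff_two
  neg x := (hk.convolution_le_neg_one hu hu₁ x).trans_lt (by norm_num)
  contDiff_flux := contDiff_mollifiedFlux ha hu hk.contDiff_two
    hk.hasCompactSupport
  divergence_nonneg x hx := by
    rw [divergence_mollifiedFlux ha hu hk.contDiff_two
      hk.hasCompactSupport]
    exact hsub _ (hk.isTestFunction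
      ((closedBall_subset_cthickening hx s).trans hK))

lemma IsMollifier.sq_norm_fluxDefect_le [μ.IsAddHaarMeasure] (hk : IsMollifier μ M s k)
    (ha : ∀ i j, ContDiff ℝ 1 (a i j)) (hs : s ≤ 1) (hu : LocallyIntegrable u μ)
    (hu₁ : ∀ x, u x ≤ -1)
    (hΛ : ∀ y, ‖x - y‖ ≤ 1 →
      ‖fluxCommutator B a k x y‖ ≤ Λ * (‖x - y‖ * ‖fderiv ℝ k (x - y)‖)) :
    ‖fluxDefect B a (u ⋆[ContinuousLinearMap.mul ℝ ℝ, μ] k) (mollifiedFlux μ B a k u) x‖ ^ 2 ≤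
      |(u ⋆[ContinuousLinearMap.mul ℝ ℝ, μ] k) x| *
        (Λ ^ 2 * M * ⨍ y in closedBall x s, |u y| ∂μ) := by
  have hc := hk.hasCompactSupport
  have hk₁ : ContDiff ℝ 1 k := hk.contDiff_two.of_le one_le_two
  have hu' : LocallyIntegrable (fun y => |u y|) μ := fun y => (hu y).norm
  have hm : 0 ≤ M / μ.real (closedBall (0 : V) s) := (hk.nonneg 0).trans (hk.le 0)
  have habs : |(u ⋆[ContinuousLinearMap.mul ℝ ℝ, μ] k) x| = ∫ y, |u y| * k (x - y) ∂μ := by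
    rw [abs_of_neg ((hk.convolution_le_neg_one hu hu₁ x).trans_lt (by norm_num)), convolution_mul,
      ← integral_neg]
    exact integral_congr_ae (Eventually.of_forall fun y => by
      simp [abs_of_neg ((hu₁ y).trans_lt neg_one_lt_zero)])
  have haverage : Λ ^ 2 * M * ⨍ y in closedBall x s, |u y| ∂μ =
      ∫ y, (closedBall x s).indicator
        (fun y => Λ ^ 2 * (M / μ.real (closedBall 0 s)) * |u y|) y ∂μ := by
    rw [integral_indicator measurableSet_closedBall, integral_const_mul, setAverage_eq,
      Measure.addHaar_real_closedBall_center, smul_eq_mul]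
    ring
  rw [fluxDefect_mollifiedFlux ha hu hk₁ hc, habs, haverage]
  refine sq_norm_integral_le (hu.integrable_smul_right_of_hasCompactSupport
    (continuous_fluxCommutator ha hk₁ x) (hasCompactSupport_fluxCommutator hc x))
    (hc.convolutionExists_right (ContinuousLinearMap.mul ℝ ℝ) hu' hk₁.continuous x)
    (IntegrableOn.integrable_indicator
      ((hu'.integrableOn_isCompact (isCompact_closedBall x s)).const_mul _)
      measurableSet_closedBall)
    (fun y => mul_nonneg (abs_nonneg _) (hk.nonneg _))
    (Set.indicator_nonneg fun y _ => by positivity) fun y => ?_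
  rcases le_or_gt ‖x - y‖ s with hy | hy
  · rw [Set.indicator_of_mem (by rwa [mem_closedBall, dist_comm, dist_eq_norm]), norm_smul, mul_pow,
      Real.norm_eq_abs]
    calc |u y| ^ 2 * ‖fluxCommutator B a k x y‖ ^ 2
        ≤ |u y| ^ 2 * (Λ ^ 2 * (M / μ.real (closedBall 0 s) * k (x - y))) := by
          gcongr
          exact hk.sq_norm_fluxCommutator_le hs hΛ y
      _ = _ := by ring
  · simp [hk.fluxCommutator_eq_zero hy, hk.eq_zero _ hy]

lemma IsMollifier.fluxError_le [μ.IsAddHaarMeasure] (hk : IsMollifier μ M s k)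
    (ha : ∀ i j, ContDiff ℝ 1 (a i j)) (hs : s ≤ 1) (hu : LocallyIntegrable u μ)
    (hu₁ : ∀ x, u x ≤ -1) {T : ℝ} (hT : 0 ≤ T)
    (hΛ : ∀ y, ‖x - y‖ ≤ 1 →
      ‖fluxCommutator B a k x y‖ ≤ Λ * (‖x - y‖ * ‖fderiv ℝ k (x - y)‖)) :
    fluxError B a (u ⋆[ContinuousLinearMap.mul ℝ ℝ, μ] k) (mollifiedFlux μ B a k u) x ≤
      (1 + √T) * ‖fluxDefect B a (u ⋆[ContinuousLinearMap.mul ℝ ℝ, μ] k)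
        (mollifiedFlux μ B a k u) x‖ + max (Λ ^ 2 * M * |u x| - T) 0 +
        |Λ ^ 2 * M * ((⨍ y in closedBall x s, |u y| ∂μ) - |u x|)| := by
  have hf₁ : 1 ≤ |(u ⋆[ContinuousLinearMap.mul ℝ ℝ, μ] k) x| :=
    le_abs.2 (.inr (le_neg_of_le_neg (hk.convolution_le_neg_one hu hu₁ x)))
  have hf₀ : 0 < |(u ⋆[ContinuousLinearMap.mul ℝ ℝ, μ] k) x| := one_pos.trans_le hf₁
  rw [fluxError, mul_sub]
  have := le_sqrt_mul_add_max_add_abs (w := Λ ^ 2 * M * |u x|) hT (norm_nonneg _)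
    (div_le_self (sq_nonneg _) hf₁)
    ((div_le_iff₀' hf₀).2 (hk.sq_norm_fluxDefect_le (B := B) ha hs hu hu₁ hΛ))
  linarith

lemma IsMollifier.lintegral_enorm_convolution_sub_le [μ.IsAddHaarMeasure]
    (hk : IsMollifier μ M s k) (hs : 0 < s) (hm : Measurable u) (hu : LocallyIntegrable u μ)
    (hK : MeasurableSet K) {η : ℝ≥0∞}
    (hη : ∀ h ∈ closedBall 0 s, ∫⁻ x in K, ‖u (h + x) - u x‖ₑ ∂μ ≤ η) :
    ∫⁻ x in K, ‖(u ⋆[ContinuousLinearMap.mul ℝ ℝ, μ] k) x - u x‖ₑ ∂μ ≤ ENNReal.ofReal M * η := by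
  have hdiff (x : V) : (u ⋆[ContinuousLinearMap.mul ℝ ℝ, μ] k) x - u x =
      ∫ y, (u y - u x) • k (x - y) ∂μ := by
    have hkx : Integrable (fun y => k (x - y)) μ :=
      (hk.contDiff.continuous.integrable_of_hasCompactSupport hk.hasCompactSupport).comp_sub_left x
    have hux : Integrable (fun y => u y * k (x - y)) μ :=
      hk.hasCompactSupport.convolutionExists_right (ContinuousLinearMap.mul ℝ ℝ) hu
        hk.contDiff.continuous x
    simp_rw [smul_eq_mul, sub_mul]
    rw [integral_sub hux (hkx.const_mul _), integral_const_mul, integral_sub_left_eq_self k,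
      hk.integral_eq_one, mul_one, convolution_mul]
  simp_rw [hdiff]
  refine lintegral_enorm_integral_sub_smul_le hm hK hs (fun x _ y => ?_)
    (fun x _ y h => hk.eq_zero _ h) hη
  rw [Real.norm_of_nonneg (hk.nonneg _)]
  exact hk.le _

lemma IsMollifier.lintegral_enorm_fluxDefect_le [μ.IsAddHaarMeasure] (hk : IsMollifier μ M s k)
    (ha : IsEllipticCoeff B a) (hs₀ : 0 < s) (hs : s ≤ 1) (hm : Measurable u)
    (hu : LocallyIntegrable u μ) (hK : MeasurableSet K) (hΛ₀ : 0 ≤ Λ)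
    (hΛ : ∀ x ∈ K, ∀ y, ‖x - y‖ ≤ 1 →
      ‖fluxCommutator B a k x y‖ ≤ Λ * (‖x - y‖ * ‖fderiv ℝ k (x - y)‖)) {η : ℝ≥0∞}
    (hη : ∀ h ∈ closedBall 0 s, ∫⁻ x in K, ‖u (h + x) - u x‖ₑ ∂μ ≤ η) :
    ∫⁻ x in K, ‖fluxDefect B a (u ⋆[ContinuousLinearMap.mul ℝ ℝ, μ] k)
      (mollifiedFlux μ B a k u) x‖ₑ ∂μ ≤ ENNReal.ofReal (Λ * M) * η := by
  have hk₁ : ContDiff ℝ 1 k := hk.contDiff_two.of_le one_le_two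
  have hdefect (x : V) : fluxDefect B a (u ⋆[ContinuousLinearMap.mul ℝ ℝ, μ] k)
      (mollifiedFlux μ B a k u) x = ∫ y, (u y - u x) • fluxCommutator B a k x y ∂μ := by
    have hcont := continuous_fluxCommutator (B := B) ha.contDiff hk₁ x
    have hcomp := hasCompactSupport_fluxCommutator (B := B) (a := a) hk.hasCompactSupport x
    have hint : Integrable (fun y => u x • fluxCommutator B a k x y) μ :=
      (hcont.integrable_of_hasCompactSupport hcomp).smul (u x)
    simp_rw [sub_smul]
    rw [integral_sub (hu.integrable_smul_right_of_hasCompactSupport hcont hcomp) hint,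
      integral_smul,
      integral_fluxCommutator_eq_zero ha hk₁ hk.hasCompactSupport, smul_zero, sub_zero,
      fluxDefect_mollifiedFlux ha.contDiff hu hk₁ hk.hasCompactSupport]
  simp_rw [hdefect]
  refine lintegral_enorm_integral_sub_smul_le hm hK hs₀ (fun x hx y => ?_)
    (fun x _ y h => hk.fluxCommutator_eq_zero h) hη
  rw [mul_div_assoc]
  exact hk.norm_fluxCommutator_le hs hΛ₀ (hΛ x hx) y

lemma lintegral_enorm_setAverage_sub_le [μ.IsAddHaarMeasure] (hs : 0 < s) (hm : Measurable u)
    (hu : LocallyIntegrable u μ) (hK : MeasurableSet K) {η : ℝ≥0∞}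
    (hη : ∀ h ∈ closedBall 0 s, ∫⁻ x in K, ‖u (h + x) - u x‖ₑ ∂μ ≤ η) :
    ∫⁻ x in K, ‖(⨍ y in closedBall x s, u y ∂μ) - u x‖ₑ ∂μ ≤ η := by
  have hball (x : V) : μ.real (closedBall x s) ≠ 0 :=
    (ENNReal.toReal_pos (measure_closedBall_pos μ x hs).ne' measure_closedBall_lt_top.ne).ne'
  have haverage (x : V) : (⨍ y in closedBall x s, u y ∂μ) - u x =
      ∫ y, (u y - u x) • (closedBall x s).indicator
        (fun _ => (1 : ℝ) / μ.real (closedBall (0 : V) s)) y ∂μ := by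
    have hindicator (y : V) : (u y - u x) • (closedBall x s).indicator
        (fun _ => (1 : ℝ) / μ.real (closedBall (0 : V) s)) y =
        (closedBall x s).indicator
          (fun y => (u y - u x) * (1 / μ.real (closedBall (0 : V) s))) y := by
      rw [smul_eq_mul, Set.indicator_mul_right]
    simp_rw [hindicator]
    rw [integral_indicator measurableSet_closedBall, integral_mul_const,
      integral_sub (hu.integrableOn_isCompact (isCompact_closedBall x s))
        (integrableOn_const measure_closedBall_lt_top.ne), setIntegral_const, setAverage_eq,
      ← Measure.addHaar_real_closedBall_center μ x, smul_eq_mul, smul_eq_mul, mul_one_div,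
      sub_div, mul_div_cancel_left₀ _ (hball x), inv_mul_eq_div]
  simp_rw [haverage]
  refine (lintegral_enorm_integral_sub_smul_le (C := 1) hm hK hs (fun x _ y => ?_)
    (fun x _ y h => ?_) hη).trans_eq (by simp)
  · refine (norm_indicator_le_norm_self _ y).trans_eq (Real.norm_of_nonneg (by positivity))
  · exact Set.indicator_of_notMem (by simpa [dist_eq_norm, norm_sub_rev] using h) _

lemma IsMollifier.lintegral_enorm_sub_add_fluxError_le [μ.IsAddHaarMeasure]
    (hk : IsMollifier μ M s k) (ha : IsEllipticCoeff B a) (hs₀ : 0 < s) (hs : s ≤ 1)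
    (hm : Measurable u) (hu : LocallyIntegrable u μ) (hu₁ : ∀ x, u x ≤ -1) (hK : MeasurableSet K)
    (hΛ₀ : 0 ≤ Λ) (hΛ : ∀ x ∈ K, ∀ y, ‖x - y‖ ≤ 1 →
      ‖fluxCommutator B a k x y‖ ≤ Λ * (‖x - y‖ * ‖fderiv ℝ k (x - y)‖))
    {T : ℝ} (hT : 0 ≤ T) {η : ℝ≥0∞}
    (hη : ∀ h ∈ closedBall 0 s, ∫⁻ x in K, ‖u (h + x) - u x‖ₑ ∂μ ≤ η) :
    ∫⁻ x in K, (‖(u ⋆[ContinuousLinearMap.mul ℝ ℝ, μ] k) x - u x‖ₑ + ENNReal.ofReal (fluxError B a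
        (u ⋆[ContinuousLinearMap.mul ℝ ℝ, μ] k) (mollifiedFlux μ B a k u) x)) ∂μ ≤
      (ENNReal.ofReal M + ENNReal.ofReal (1 + √T) * ENNReal.ofReal (Λ * M) +
        ‖Λ ^ 2 * M‖ₑ) * η +
      ∫⁻ x in K, ENNReal.ofReal (Λ ^ 2 * M * |u x| - T) ∂μ := by
  set f := u ⋆[ContinuousLinearMap.mul ℝ ℝ, μ] k
  set X := mollifiedFlux μ B a k u
  have hf : ContDiff ℝ 1 f :=
    (hk.hasCompactSupport.contDiff_convolution_right _ hu hk.contDiff_two).of_le one_le_two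
  have hfm : Measurable f := hf.continuous.measurable
  have hdefect : Measurable (fluxDefect B a f X) :=
    (continuous_fluxDefect (fun i j => (ha.contDiff i j).continuous) hf
      (contDiff_mollifiedFlux (fun i j => (ha.contDiff i j).continuous) hu hk.contDiff_two
        hk.hasCompactSupport)).measurable
  have hη' (h : V) (hh : h ∈ closedBall 0 s) : ∫⁻ x in K, ‖|u (h + x)| - |u x|‖ₑ ∂μ ≤ η :=
    (lintegral_mono fun x => enorm_le_iff_norm_le.2 (norm_abs_sub_abs _ _)).trans (hη h hh)
  calc _ ≤ ∫⁻ x in K, (‖f x - u x‖ₑ + ENNReal.ofReal (1 + √T) * ‖fluxDefect B a f X x‖ₑ +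
          ENNReal.ofReal (Λ ^ 2 * M * |u x| - T) +
          ‖Λ ^ 2 * M‖ₑ * ‖(⨍ y in closedBall x s, |u y| ∂μ) - |u x|‖ₑ) ∂μ := by
        refine setLIntegral_mono' hK fun x hx => ?_
        rw [add_assoc, add_assoc]
        gcongr
        refine (ENNReal.ofReal_le_ofReal
          (hk.fluxError_le ha.contDiff hs hu hu₁ hT (hΛ x hx))).trans_eq ?_
        rw [ENNReal.ofReal_add (by positivity) (abs_nonneg _),
          ENNReal.ofReal_add (by positivity) (le_max_right _ _), ENNReal.ofReal_mul (by positivity),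
          ofReal_norm, ENNReal.ofReal_max, ENNReal.ofReal_zero, max_eq_left zero_le,
          ← Real.enorm_eq_ofReal_abs, enorm_mul, add_assoc]
    _ = ∫⁻ x in K, ‖f x - u x‖ₑ ∂μ +
          ENNReal.ofReal (1 + √T) * ∫⁻ x in K, ‖fluxDefect B a f X x‖ₑ ∂μ +
          ∫⁻ x in K, ENNReal.ofReal (Λ ^ 2 * M * |u x| - T) ∂μ + ‖Λ ^ 2 * M‖ₑ *
          ∫⁻ x in K, ‖(⨍ y in closedBall x s, |u y| ∂μ) - |u x|‖ₑ ∂μ := by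
        rw [lintegral_add_left (by fun_prop), lintegral_add_left (by fun_prop),
          lintegral_add_left (by fun_prop), lintegral_const_mul _ (by fun_prop),
          lintegral_const_mul' _ _ enorm_ne_top]
    _ ≤ ENNReal.ofReal M * η + ENNReal.ofReal (1 + √T) * (ENNReal.ofReal (Λ * M) * η) +
          ∫⁻ x in K, ENNReal.ofReal (Λ ^ 2 * M * |u x| - T) ∂μ +
          ‖Λ ^ 2 * M‖ₑ * η := by
        gcongr
        · exact hk.lintegral_enorm_convolution_sub_le hs₀ hm hu hK hη
        · exact hk.lintegral_enorm_fluxDefect_le ha hs₀ hs hm hu hK hΛ₀ hΛ hη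
        · exact lintegral_enorm_setAverage_sub_le hs₀ hm.abs (fun y => (hu y).norm) hK hη'
    _ = _ := by ring

lemma exists_lintegral_ofReal_mul_abs_sub_le {X : Type*} [MeasurableSpace X] {μ : Measure X}
    {u : X → ℝ} (hu : Integrable u μ) (c : ℝ) {ε : ℝ≥0∞} (hε : ε ≠ 0) :
    ∃ T : ℝ, 0 ≤ T ∧ ∫⁻ x, ENNReal.ofReal (c * |u x| - T) ∂μ ≤ ε := by
  have hdom : ∫⁻ x, ‖c * u x‖ₑ ∂μ ≠ ⊤ := (hu.const_mul c).2.ne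
  have hlim : Tendsto (fun N : ℕ => ∫⁻ x, ENNReal.ofReal (c * |u x| - N) ∂μ) atTop (𝓝 0) := by
    rw [← lintegral_zero]
    refine tendsto_lintegral_of_dominated_convergence' _ (fun N => ?_)
      (fun N => Eventually.of_forall fun x => ?_) hdom (Eventually.of_forall fun x => ?_)
    · exact ((hu.1.norm.const_mul c).aemeasurable.sub_const _).ennreal_ofReal
    · rw [Real.enorm_eq_ofReal_abs, abs_mul]
      refine ENNReal.ofReal_le_ofReal ((sub_le_self _ N.cast_nonneg).trans ?_)
      gcongr
      exact le_abs_self c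
    · obtain ⟨N₀, hN₀⟩ := exists_nat_ge (c * |u x|)
      refine tendsto_const_nhds.congr' ((eventually_ge_atTop N₀).mono fun N hN => ?_)
      exact (ENNReal.ofReal_of_nonpos (sub_nonpos.2 (hN₀.trans (Nat.cast_le.2 hN)))).symm
  obtain ⟨N, hN⟩ := (hlim.eventually_le_const (pos_iff_ne_zero.2 hε)).exists
  exact ⟨N, N.cast_nonneg, hN⟩

lemma IsWeakSubsolution.exists_isFluxSubsolution [μ.IsAddHaarMeasure]
    (hsub : IsWeakSubsolution μ B a Ω u) (ha : IsEllipticCoeff B a) (hΩ : IsOpen Ω)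
    (hm : Measurable u) (hu : LocallyIntegrable u μ) (hu₁ : ∀ x, u x ≤ -1) (hK : IsCompact K)
    (hKΩ : K ⊆ Ω) {ε : ℝ} (hε : 0 < ε) :
    ∃ f X, IsFluxSubsolution B K f X ∧ ∫ x in K, (|f x - u x| + fluxError B a f X x) ∂μ ≤ ε := by
  obtain ⟨M, k, hk⟩ := exists_isMollifier_one μ
  obtain ⟨Λ, hΛ₀, hΛ⟩ := exists_norm_fluxCommutator_le (B := B) ha.contDiff hK
  obtain ⟨T, hT, htail⟩ := exists_lintegral_ofReal_mul_abs_sub_le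
    (hu.integrableOn_isCompact hK) (Λ ^ 2 * M) (ENNReal.half_pos (ENNReal.ofReal_pos.2 hε).ne').ne'
  obtain ⟨δ, hδ, hδΩ⟩ := hK.exists_cthickening_subset_open hΩ hKΩ
  set c := ENNReal.ofReal M + ENNReal.ofReal (1 + √T) * ENNReal.ofReal (Λ * M) +
    ‖Λ ^ 2 * M‖ₑ
  have hc : c ≠ ⊤ := by unfold c; finiteness
  have hη : 0 < ENNReal.ofReal ε / 2 / c :=
    ENNReal.div_pos (ENNReal.half_pos (ENNReal.ofReal_pos.2 hε).ne').ne' hc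
  obtain ⟨r, hr, hrη⟩ := Metric.nhds_basis_closedBall.eventually_iff.1
    ((tendsto_setLIntegral_enorm_translate_sub hu hK).eventually_le_const hη)
  let s := min (min r δ) 1
  have hs : 0 < s := by positivity
  have hks := hk.rescale hs
  have hflux := hsub.isFluxSubsolution_convolution (fun i j => (ha.contDiff i j).continuous) hu hu₁
    hks ((cthickening_mono ((min_le_left _ _).trans (min_le_right _ _)) K).trans hδΩ)
  have hle := hks.lintegral_enorm_sub_add_fluxError_le ha hs (min_le_right _ _) hm hu hu₁
    hK.measurableSet hΛ₀ (hΛ _) hT fun h hh => hrη (closedBall_subset_closedBall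
      ((min_le_left _ _).trans (min_le_left _ _)) hh)
  set f := u ⋆[ContinuousLinearMap.mul ℝ ℝ, μ] _
  set X := mollifiedFlux μ B a _ u
  refine ⟨f, X, hflux, ?_⟩
  have hnonneg (x : V) : 0 ≤ |f x - u x| + fluxError B a f X x :=
    add_nonneg (abs_nonneg _) (fluxError_nonneg ..)
  have hmeas : Measurable fun x => |f x - u x| + fluxError B a f X x :=
    (hflux.contDiff.continuous.measurable.sub hm).abs.add
      (hflux.continuous_fluxError ha).measurable
  rw [integral_eq_lintegral_of_nonneg_ae (.of_forall hnonneg) hmeas.aestronglyMeasurable]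
  refine ENNReal.toReal_le_of_le_ofReal hε.le ?_
  calc ∫⁻ x in K, ENNReal.ofReal (|f x - u x| + fluxError B a f X x) ∂μ
      = ∫⁻ x in K, (‖f x - u x‖ₑ + ENNReal.ofReal (fluxError B a f X x)) ∂μ := by
        simp_rw [ENNReal.ofReal_add (abs_nonneg _) (fluxError_nonneg ..), Real.enorm_eq_ofReal_abs]
    _ ≤ ENNReal.ofReal ε / 2 + ENNReal.ofReal ε / 2 := by
        refine hle.trans ?_
        gcongr
        exact ENNReal.mul_div_le
    _ = ENNReal.ofReal ε := ENNReal.add_halves _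

end Regularization

section MaxSubsolution

lemma exists_le_neg_one_ae_eq_add_const {X : Type*} [MetricSpace X] [MeasurableSpace X]
    [BorelSpace X] {μ : Measure X} [IsLocallyFiniteMeasure μ] {u : X → ℝ} {Ω K : Set X}
    (hu : LocallyIntegrableOn u Ω μ) (hK : IsCompact K)
    (hKΩ : K ⊆ Ω) {c : ℝ} (hc : ∀ x ∈ K, u x ≤ c) :
    ∃ u' : X → ℝ, Measurable u' ∧ LocallyIntegrable u' μ ∧ (∀ x, u' x ≤ -1) ∧
      ∀ᵐ x ∂μ, x ∈ K → u x = u' x + (c + 1) := by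
  have hi : IntegrableOn u K μ := hu.integrableOn_compact_subset hKΩ hK
  have hmk : Integrable (K.indicator fun x => hi.1.mk u x - c) μ :=
    IntegrableOn.integrable_indicator
      ((hi.congr hi.1.ae_eq_mk).sub (integrableOn_const hK.measure_lt_top.ne)) hK.measurableSet
  have hmeas : Measurable (K.indicator fun x => hi.1.mk u x - c) :=
    (hi.1.stronglyMeasurable_mk.measurable.sub_const c).indicator hK.measurableSet
  refine ⟨fun x => min (K.indicator (fun x => hi.1.mk u x - c) x) 0 - 1,
    (hmeas.min measurable_const).sub_const 1,
    (hmk.inf (integrable_zero X ℝ μ)).locallyIntegrable.sub (locallyIntegrable_const 1),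
    fun x => by linarith [min_le_right (K.indicator (fun x => hi.1.mk u x - c) x) 0], ?_⟩
  filter_upwards [(ae_restrict_iff' hK.measurableSet).1 hi.1.ae_eq_mk] with x hx hxK
  rw [Set.indicator_of_mem hxK, ← hx hxK, min_eq_left (sub_nonpos.2 (hc x hxK))]
  ring

lemma locallyIntegrable_smoothMax {X : Type*} [TopologicalSpace X] [MeasurableSpace X]
    {μ : Measure X} {u v : X → ℝ} (θ : ℝ) (hum : Measurable u) (hvm : Measurable v)
    (hu : LocallyIntegrable u μ) (hv : LocallyIntegrable v μ) :
    LocallyIntegrable (fun x => smoothMax θ (u x) (v x)) μ := by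
  have habs : LocallyIntegrable (fun x => |u x| + |v x|) μ := fun x => (hu x).norm.add (hv x).norm
  refine habs.mono (Measurable.aestronglyMeasurable ?_) (.of_forall fun x => ?_)
  · unfold smoothMax thirdSide
    fun_prop
  · have := abs_smoothMax_sub_smoothMax_le θ (u x) (v x) 0 0
    have hzero : smoothMax θ 0 0 = 0 := by simp [smoothMax, thirdSide]
    rw [hzero, sub_zero, sub_zero, sub_zero] at this
    rwa [Real.norm_of_nonneg (add_nonneg (abs_nonneg _) (abs_nonneg _))]

lemma locallyIntegrableOn_max {X : Type*} [TopologicalSpace X] [MeasurableSpace X] {μ : Measure X}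
    {u v : X → ℝ} {Ω : Set X} (hu : LocallyIntegrableOn u Ω μ) (hv : LocallyIntegrableOn v Ω μ) :
    LocallyIntegrableOn (fun x => max (u x) (v x)) Ω μ := by
  intro x hx
  obtain ⟨s, hs, hus⟩ := hu x hx
  obtain ⟨t, ht, hvt⟩ := hv x hx
  exact ⟨s ∩ t, Filter.inter_mem hs ht, (hus.mono_set Set.inter_subset_left).sup
    (hvt.mono_set Set.inter_subset_right)⟩

lemma locallyIntegrable_max {X : Type*} [TopologicalSpace X] [MeasurableSpace X] {μ : Measure X}
    {u v : X → ℝ} (hu : LocallyIntegrable u μ) (hv : LocallyIntegrable v μ) :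
    LocallyIntegrable (fun x => max (u x) (v x)) μ :=
  locallyIntegrableOn_univ.1 <|
    locallyIntegrableOn_max (hu.locallyIntegrableOn _) (hv.locallyIntegrableOn _)

variable {V : Type*} [NormedAddCommGroup V] [NormedSpace ℝ V] {ι : Type*} [Fintype ι]
  {B : ι → V} {a : ι → ι → V → ℝ} {u v w φ : V → ℝ} {Ω Ω' : Set V}

lemma IsTestFunction.contDiff_two (hφ : IsTestFunction Ω φ) : ContDiff ℝ 2 φ :=
  mod_cast contDiff_infty.1 hφ.contDiff 2

lemma IsTestFunction.mono (hφ : IsTestFunction Ω φ) (h : Ω ⊆ Ω') : IsTestFunction Ω' φ :=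
  ⟨hφ.contDiff, hφ.hasCompactSupport, hφ.tsupport_subset.trans h, hφ.nonneg⟩

variable [MeasurableSpace V] {μ : Measure V}

lemma IsWeakSubsolution.mono (hu : IsWeakSubsolution μ B a Ω' u) (h : Ω ⊆ Ω') :
    IsWeakSubsolution μ B a Ω u := fun φ hφ => hu φ (hφ.mono h)

variable [BorelSpace V]

lemma integrable_mul_secondOrderOp (hu : IntegrableOn u (tsupport φ) μ)
    (ha : ∀ i j, Continuous (a i j)) (hφ : ContDiff ℝ 2 φ) (hc : HasCompactSupport φ) :
    Integrable (fun x => u x * secondOrderOp B a φ x) μ :=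
  (integrableOn_iff_integrable_of_support_subset fun x hx => by
    by_contra h
    exact hx (by simp [secondOrderOp_eq_zero_of_notMem_tsupport h])).1 <|
    hu.mul_continuousOn (continuous_secondOrderOp ha hφ).continuousOn hc

lemma IsTestFunction.integrable_mul_secondOrderOp (hφ : IsTestFunction Ω φ)
    (ha : ∀ i j, Continuous (a i j)) (hu : LocallyIntegrableOn u Ω μ) :
    Integrable (fun x => u x * secondOrderOp B a φ x) μ :=
  _root_.integrable_mul_secondOrderOp
    (hu.integrableOn_compact_subset hφ.tsupport_subset hφ.hasCompactSupport) ha hφ.contDiff_two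
    hφ.hasCompactSupport

lemma exists_abs_integral_mul_secondOrderOp_sub_le (B : ι → V) (ha : ∀ i j, Continuous (a i j))
    (hφ : ContDiff ℝ 2 φ) (hc : HasCompactSupport φ) :
    ∃ S, 0 ≤ S ∧ ∀ f g : V → ℝ, LocallyIntegrable f μ → LocallyIntegrable g μ →
      |∫ x, f x * secondOrderOp B a φ x ∂μ - ∫ x, g x * secondOrderOp B a φ x ∂μ| ≤
        S * ∫ x in tsupport φ, |f x - g x| ∂μ := by
  obtain ⟨S, hS⟩ := (hasCompactSupport_secondOrderOp hc).exists_bound_of_continuous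
    (continuous_secondOrderOp (B := B) ha hφ)
  refine ⟨S, (norm_nonneg _).trans (hS 0), fun f g hf hg => ?_⟩
  have hf' : IntegrableOn f (tsupport φ) μ := hf.integrableOn_isCompact hc
  have hg' : IntegrableOn g (tsupport φ) μ := hg.integrableOn_isCompact hc
  have hsub : IntegrableOn (fun x => f x - g x) (tsupport φ) μ := hf'.sub hg'
  rw [← integral_sub (integrable_mul_secondOrderOp hf' ha hφ hc)
    (integrable_mul_secondOrderOp hg' ha hφ hc), ← integral_const_mul]
  simp_rw [← sub_mul]
  rw [← setIntegral_eq_integral_of_forall_compl_eq_zero (s := tsupport φ) fun x hx => by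
    rw [secondOrderOp_eq_zero_of_notMem_tsupport hx, mul_zero]]
  refine (norm_integral_le_integral_norm _).trans (setIntegral_mono
    ((integrable_mul_secondOrderOp hsub ha hφ hc).norm.integrableOn)
    (hsub.abs.const_mul S) fun x => ?_)
  rw [norm_mul, mul_comm, Real.norm_eq_abs (f x - g x)]
  gcongr
  exact hS x

variable [FiniteDimensional ℝ V] [μ.IsAddHaarMeasure]

lemma exists_forall_neg_mul_le_integral_smoothMax_mul_secondOrderOp (ha : IsEllipticCoeff B a)
    {θ : ℝ} (hθ : 0 < Real.sin θ) (hφ : IsTestFunction Ω φ) :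
    ∃ C, ∀ (u v f g : V → ℝ) (X Y : V → ι → ℝ), Measurable u → LocallyIntegrable u μ →
      Measurable v → LocallyIntegrable v μ → IsFluxSubsolution B (tsupport φ) f X →
      IsFluxSubsolution B (tsupport φ) g Y →
      -(C * (∫ x in tsupport φ, (|f x - u x| + fluxError B a f X x) ∂μ +
        ∫ x in tsupport φ, (|g x - v x| + fluxError B a g Y x) ∂μ)) ≤
        ∫ x, smoothMax θ (u x) (v x) * secondOrderOp B a φ x ∂μ := by
  have hc := hφ.hasCompactSupport
  obtain ⟨C, hC⟩ := exists_forall_le_integral_smoothMax_mul_secondOrderOp (μ := μ) ha hθ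
    hφ.contDiff_two hc hφ.nonneg
  obtain ⟨S, hS₀, hS⟩ := exists_abs_integral_mul_secondOrderOp_sub_le (μ := μ) B
    (fun i j => (ha.contDiff i j).continuous) hφ.contDiff_two hc
  refine ⟨S + |C|, fun u v f g X Y hum hui hvm hvi hf hg => ?_⟩
  have hfi : LocallyIntegrable f μ := hf.contDiff.continuous.locallyIntegrable
  have hgi : LocallyIntegrable g μ := hg.contDiff.continuous.locallyIntegrable
  have hfu : IntegrableOn (fun x => |f x - u x|) (tsupport φ) μ :=
    ((hfi.sub hui).integrableOn_isCompact hc).abs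
  have hgv : IntegrableOn (fun x => |g x - v x|) (tsupport φ) μ :=
    ((hgi.sub hvi).integrableOn_isCompact hc).abs
  have herr {f : V → ℝ} {X : V → ι → ℝ} (hf : IsFluxSubsolution B (tsupport φ) f X) :
      IntegrableOn (fluxError B a f X) (tsupport φ) μ :=
    (hf.continuous_fluxError ha).locallyIntegrable.integrableOn_isCompact hc
  have hsmooth := (abs_le.1 (hS _ _ (locallyIntegrable_smoothMax θ
    hf.contDiff.continuous.measurable hg.contDiff.continuous.measurable hfi hgi)
    (locallyIntegrable_smoothMax θ hum hvm hui hvi))).2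
  have hlip : ∫ x in tsupport φ, |smoothMax θ (f x) (g x) - smoothMax θ (u x) (v x)| ∂μ ≤
      ∫ x in tsupport φ, (|f x - u x| + |g x - v x|) ∂μ :=
    integral_mono_of_nonneg (.of_forall fun x => abs_nonneg _) (hfu.add hgv)
      (.of_forall fun x => abs_smoothMax_sub_smoothMax_le ..)
  have hkato := hC f g X Y hf hg
  have hdist₀ : 0 ≤ ∫ x in tsupport φ, (|f x - u x| + |g x - v x|) ∂μ :=
    integral_nonneg fun x => by positivity
  have herr₀ : 0 ≤ ∫ x in tsupport φ, (fluxError B a f X x + fluxError B a g Y x) ∂μ :=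
    integral_nonneg fun x => add_nonneg (fluxError_nonneg ..) (fluxError_nonneg ..)
  rw [integral_add hfu hgv] at hlip hdist₀
  rw [integral_add (herr hf) (herr hg)] at hkato herr₀
  rw [integral_add hfu (herr hf), integral_add hgv (herr hg)]
  linarith [mul_le_mul_of_nonneg_left hlip hS₀, mul_le_mul_of_nonneg_right (le_abs_self C) herr₀,
    mul_nonneg hS₀ herr₀, mul_nonneg (abs_nonneg C) hdist₀]

lemma isWeakSubsolution_smoothMax (hu : IsWeakSubsolution μ B a Ω u)
    (hv : IsWeakSubsolution μ B a Ω v) (ha : IsEllipticCoeff B a) (hΩ : IsOpen Ω)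
    (hum : Measurable u) (hui : LocallyIntegrable u μ) (hu₁ : ∀ x, u x ≤ -1)
    (hvm : Measurable v) (hvi : LocallyIntegrable v μ) (hv₁ : ∀ x, v x ≤ -1) {θ : ℝ}
    (hθ : 0 < Real.sin θ) : IsWeakSubsolution μ B a Ω fun x => smoothMax θ (u x) (v x) := by
  intro φ hφ
  obtain ⟨C, hC⟩ :=
    exists_forall_neg_mul_le_integral_smoothMax_mul_secondOrderOp (μ := μ) ha hθ hφ
  have hlim : Tendsto (fun ε : ℝ => -(|C| * (ε + ε))) (𝓝[>] 0) (𝓝 0) := by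
    have : Continuous fun ε : ℝ => -(|C| * (ε + ε)) := by fun_prop
    simpa using (this.tendsto 0).mono_left nhdsWithin_le_nhds
  refine le_of_tendsto hlim (eventually_mem_nhdsWithin.mono fun ε (hε : 0 < ε) => ?_)
  obtain ⟨f, X, hf, hfu⟩ := hu.exists_isFluxSubsolution ha hΩ hum hui hu₁ hφ.hasCompactSupport
    hφ.tsupport_subset hε
  obtain ⟨g, Y, hg, hgv⟩ := hv.exists_isFluxSubsolution ha hΩ hvm hvi hv₁ hφ.hasCompactSupport
    hφ.tsupport_subset hε
  refine le_trans (neg_le_neg ?_) (hC u v f g X Y hum hui hvm hvi hf hg)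
  have hnonneg (f u : V → ℝ) (X : V → ι → ℝ) :
      0 ≤ ∫ x in tsupport φ, (|f x - u x| + fluxError B a f X x) ∂μ :=
    integral_nonneg fun x => add_nonneg (abs_nonneg _) (fluxError_nonneg ..)
  exact mul_le_mul (le_abs_self C) (add_le_add hfu hgv) (add_nonneg (hnonneg ..) (hnonneg ..))
    (abs_nonneg C)

lemma IsWeakSubsolution.max_of_le_neg_one (hu : IsWeakSubsolution μ B a Ω u)
    (hv : IsWeakSubsolution μ B a Ω v) (ha : IsEllipticCoeff B a) (hΩ : IsOpen Ω)
    (hum : Measurable u) (hui : LocallyIntegrable u μ) (hu₁ : ∀ x, u x ≤ -1)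
    (hvm : Measurable v) (hvi : LocallyIntegrable v μ) (hv₁ : ∀ x, v x ≤ -1) :
    IsWeakSubsolution μ B a Ω fun x => max (u x) (v x) := by
  intro φ hφ
  obtain ⟨S, hS₀, hS⟩ := exists_abs_integral_mul_secondOrderOp_sub_le (μ := μ) B
    (fun i j => (ha.contDiff i j).continuous) hφ.contDiff_two hφ.hasCompactSupport
  set J := ∫ x in tsupport φ, |v x| ∂μ
  have hlim : Tendsto (fun θ : ℝ => -(S * (|θ| * J))) (𝓝[>] 0) (𝓝 0) := by
    have : Continuous fun θ : ℝ => -(S * (|θ| * J)) := by fun_prop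
    simpa using (this.tendsto 0).mono_left nhdsWithin_le_nhds
  refine le_of_tendsto hlim ?_
  filter_upwards [Ioo_mem_nhdsGT Real.pi_pos] with θ hθ
  have hnonneg := isWeakSubsolution_smoothMax hu hv ha hΩ hum hui hu₁ hvm hvi hv₁
    (Real.sin_pos_of_mem_Ioo hθ) φ hφ
  have hdiff := hS _ _ (locallyIntegrable_smoothMax θ hum hvm hui hvi)
    (locallyIntegrable_max hui hvi)
  have hle : ∫ x in tsupport φ, |smoothMax θ (u x) (v x) - max (u x) (v x)| ∂μ ≤ |θ| * J := by
    rw [← integral_const_mul]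
    exact integral_mono_of_nonneg (.of_forall fun x => abs_nonneg _)
      ((hvi.integrableOn_isCompact hφ.hasCompactSupport).abs.const_mul _)
      (.of_forall fun x => abs_smoothMax_sub_max_le ..)
  linarith [(abs_le.1 (hdiff.trans (mul_le_mul_of_nonneg_left hle hS₀))).2]

lemma isWeakSubsolution_congr_add_const (ha : IsEllipticCoeff B a)
    (hu : LocallyIntegrableOn u Ω μ) {c : ℝ} (h : ∀ᵐ x ∂μ, x ∈ Ω → w x = u x + c) :
    IsWeakSubsolution μ B a Ω w ↔ IsWeakSubsolution μ B a Ω u := by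
  refine forall₂_congr fun φ hφ => ?_
  have hac (i j : ι) : Continuous (a i j) := (ha.contDiff i j).continuous
  suffices ∫ x, w x * secondOrderOp B a φ x ∂μ = ∫ x, u x * secondOrderOp B a φ x ∂μ by rw [this]
  calc ∫ x, w x * secondOrderOp B a φ x ∂μ
      = ∫ x, (u x * secondOrderOp B a φ x + c * secondOrderOp B a φ x) ∂μ := by
        refine integral_congr_ae (h.mono fun x hx => ?_)
        by_cases hxφ : x ∈ tsupport φ
        · simp only [hx (hφ.tsupport_subset hxφ), add_mul]
        · simp [secondOrderOp_eq_zero_of_notMem_tsupport hxφ]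
    _ = ∫ x, u x * secondOrderOp B a φ x ∂μ := by
        rw [integral_add (hφ.integrable_mul_secondOrderOp hac hu)
          (hφ.integrable_mul_secondOrderOp hac ((locallyIntegrable_const c).locallyIntegrableOn Ω)),
          integral_const_mul, integral_secondOrderOp_eq_zero ha hφ.contDiff_two
          hφ.hasCompactSupport, mul_zero, add_zero]

theorem IsWeakSubsolution.max (hu : IsWeakSubsolution μ B a Ω u)
    (hv : IsWeakSubsolution μ B a Ω v) (ha : IsEllipticCoeff B a) (hΩ : IsOpen Ω)
    (hui : LocallyIntegrableOn u Ω μ) (hvi : LocallyIntegrableOn v Ω μ)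
    (hub : ∀ K ⊆ Ω, IsCompact K → BddAbove (u '' K))
    (hvb : ∀ K ⊆ Ω, IsCompact K → BddAbove (v '' K)) :
    IsWeakSubsolution μ B a Ω fun x => max (u x) (v x) := by
  intro φ hφ
  obtain ⟨δ, hδ, hδΩ⟩ := hφ.hasCompactSupport.exists_cthickening_subset_open hΩ hφ.tsupport_subset
  have hK : IsCompact (cthickening δ (tsupport φ)) := hφ.hasCompactSupport.cthickening
  obtain ⟨cu, hcu⟩ := hub _ hδΩ hK
  obtain ⟨cv, hcv⟩ := hvb _ hδΩ hK
  obtain ⟨u', hum', hui', hu₁', huu'⟩ := exists_le_neg_one_ae_eq_add_const hui hK hδΩ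
    fun x hx => (hcu (Set.mem_image_of_mem u hx)).trans (le_max_left cu cv)
  obtain ⟨v', hvm', hvi', hv₁', hvv'⟩ := exists_le_neg_one_ae_eq_add_const hvi hK hδΩ
    fun x hx => (hcv (Set.mem_image_of_mem v hx)).trans (le_max_right cu cv)
  have hsub := thickening_subset_cthickening δ (tsupport φ)
  have hu' : IsWeakSubsolution μ B a (thickening δ (tsupport φ)) u' :=
    (isWeakSubsolution_congr_add_const ha (hui'.locallyIntegrableOn _)
      (huu'.mono fun x h hx => h (hsub hx))).1 (hu.mono (hsub.trans hδΩ))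
  have hv' : IsWeakSubsolution μ B a (thickening δ (tsupport φ)) v' :=
    (isWeakSubsolution_congr_add_const ha (hvi'.locallyIntegrableOn _)
      (hvv'.mono fun x h hx => h (hsub hx))).1 (hv.mono (hsub.trans hδΩ))
  have hmax := hu'.max_of_le_neg_one hv' ha isOpen_thickening hum' hui' hu₁' hvm' hvi' hv₁'
  refine (isWeakSubsolution_congr_add_const ha
    ((locallyIntegrable_max hui' hvi').locallyIntegrableOn _)
    (c := Max.max cu cv + 1) ?_).2 hmax φ
    ⟨hφ.contDiff, hφ.hasCompactSupport, self_subset_thickening hδ _, hφ.nonneg⟩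
  filter_upwards [huu', hvv'] with x hux hvx hx
  rw [hux (hsub hx), hvx (hsub hx), max_add_add_right]

end MaxSubsolution

section Subsolution

lemma IsTestFunction.exists_add_eq {V : Type*} [NormedAddCommGroup V] [NormedSpace ℝ V]
    [FiniteDimensional ℝ V] {Ω Ω' : Set V} {φ : V → ℝ} (hφ : IsTestFunction (Ω ∪ Ω') φ)
    (hΩ : IsOpen Ω) (hΩ' : IsOpen Ω') :
    ∃ φ₁ φ₂, IsTestFunction Ω φ₁ ∧ IsTestFunction Ω' φ₂ ∧ φ₁ + φ₂ = φ := by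
  obtain ⟨χ, hχ⟩ := SmoothPartitionOfUnity.exists_isSubordinate (modelWithCornersSelf ℝ V)
    (isClosed_tsupport φ) (fun b : Bool => cond b Ω Ω') (Bool.rec hΩ' hΩ)
    (hφ.tsupport_subset.trans_eq Set.union_eq_iUnion)
  have htest (b : Bool) : IsTestFunction (cond b Ω Ω') fun x => χ b x * φ x :=
    ⟨(χ b).contMDiff.contDiff.mul hφ.contDiff, hφ.hasCompactSupport.mul_left,
      tsupport_mul_subset_left.trans (hχ b), fun x => mul_nonneg (χ.nonneg b x) (hφ.nonneg x)⟩
  refine ⟨_, _, htest true, htest false, funext fun x => ?_⟩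
  by_cases hx : x ∈ tsupport φ
  · have hsum := χ.sum_eq_one hx
    rw [finsum_eq_sum_of_fintype, Fintype.sum_bool] at hsum
    rw [Pi.add_apply, ← add_mul, hsum, one_mul]
  · simp [image_eq_zero_of_notMem_tsupport hx]

variable {V : Type*} [NormedAddCommGroup V] [NormedSpace ℝ V] {ι : Type*} [Fintype ι]
  {B : ι → V} {a : ι → ι → V → ℝ} {u v ρ : V → ℝ} {Ω Ω' K : Set V} {c : ℝ}
  [MeasurableSpace V] {μ : Measure V}

/-- A strongly upper semicontinuous, locally integrable weak subsolution on `Ω`: the real-valued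
counterpart of `IsAlphaSubharmonic` for a general operator `secondOrderOp B a`. -/
structure IsSubsolution (μ : Measure V) (B : ι → V) (a : ι → ι → V → ℝ) (Ω : Set V) (u : V → ℝ) :
    Prop where
  upperSemicontinuousOn : UpperSemicontinuousOn u Ω
  frequently_lt : ∀ x ∈ Ω, ∀ S : Set V, (∃ N ∈ 𝓝 x, μ (N \ S) = 0) →
    ∀ c < u x, ∃ᶠ y in 𝓝[S] x, c < u y
  locallyIntegrableOn : LocallyIntegrableOn u Ω μ
  isWeakSubsolution : IsWeakSubsolution μ B a Ω u

lemma IsSubsolution.mono (hu : IsSubsolution μ B a Ω' u) (h : Ω ⊆ Ω') :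
    IsSubsolution μ B a Ω u :=
  ⟨hu.upperSemicontinuousOn.mono h, fun x hx => hu.frequently_lt x (h hx),
    hu.locallyIntegrableOn.mono_set h, hu.isWeakSubsolution.mono h⟩

lemma IsSubsolution.const_mul (hu : IsSubsolution μ B a Ω u) (hc : 0 < c) :
    IsSubsolution μ B a Ω fun x => c * u x where
  upperSemicontinuousOn := (continuous_const_mul c).comp_upperSemicontinuousOn
    hu.upperSemicontinuousOn (monotone_mul_left_of_nonneg hc.le)
  frequently_lt x hx S hS t ht :=
    (hu.frequently_lt x hx S hS (t / c) ((div_lt_iff₀' hc).2 ht)).mono fun y hy =>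
      (div_lt_iff₀' hc).1 hy
  locallyIntegrableOn := hu.locallyIntegrableOn.smul c
  isWeakSubsolution φ hφ := by
    simp only [mul_assoc, integral_const_mul]
    exact mul_nonneg hc.le (hu.isWeakSubsolution φ hφ)

variable [BorelSpace V] [FiniteDimensional ℝ V]

lemma IsWeakSubsolution.union (hu : IsWeakSubsolution μ B a Ω u)
    (hu' : IsWeakSubsolution μ B a Ω' u) (ha : ∀ i j, Continuous (a i j)) (hΩ : IsOpen Ω)
    (hΩ' : IsOpen Ω') (hui : LocallyIntegrableOn u (Ω ∪ Ω') μ) :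
    IsWeakSubsolution μ B a (Ω ∪ Ω') u := by
  intro φ hφ
  obtain ⟨φ₁, φ₂, hφ₁, hφ₂, rfl⟩ := hφ.exists_add_eq hΩ hΩ'
  simp only [secondOrderOp_add hφ₁.contDiff_two hφ₂.contDiff_two, mul_add]
  rw [integral_add
    ((hφ₁.mono Set.subset_union_left).integrable_mul_secondOrderOp ha hui)
    ((hφ₂.mono Set.subset_union_right).integrable_mul_secondOrderOp ha hui)]
  exact add_nonneg (hu φ₁ hφ₁) (hu' φ₂ hφ₂)

lemma IsSubsolution.union (hu : IsSubsolution μ B a Ω u) (hu' : IsSubsolution μ B a Ω' u)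
    (ha : ∀ i j, Continuous (a i j)) (hΩ : IsOpen Ω) (hΩ' : IsOpen Ω') :
    IsSubsolution μ B a (Ω ∪ Ω') u := by
  have hloc : LocallyIntegrableOn u (Ω ∪ Ω') μ := by
    rintro x (hx | hx) <;> rw [(hΩ.union hΩ').nhdsWithin_eq (by tauto)]
    · exact hΩ.nhdsWithin_eq hx ▸ hu.locallyIntegrableOn x hx
    · exact hΩ'.nhdsWithin_eq hx ▸ hu'.locallyIntegrableOn x hx
  refine ⟨?_, ?_, hloc, hu.isWeakSubsolution.union hu'.isWeakSubsolution ha hΩ hΩ' hloc⟩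
  · rintro x (hx | hx) t ht <;> rw [(hΩ.union hΩ').nhdsWithin_eq (by tauto)]
    · exact hΩ.nhdsWithin_eq hx ▸ hu.upperSemicontinuousOn x hx t ht
    · exact hΩ'.nhdsWithin_eq hx ▸ hu'.upperSemicontinuousOn x hx t ht
  · rintro x (hx | hx)
    exacts [hu.frequently_lt x hx, hu'.frequently_lt x hx]

variable [μ.IsAddHaarMeasure]

lemma IsSubsolution.sub_const (hu : IsSubsolution μ B a Ω u) (ha : IsEllipticCoeff B a) (c : ℝ) :
    IsSubsolution μ B a Ω fun x => u x - c where
  upperSemicontinuousOn := (continuous_sub_right c).comp_upperSemicontinuousOn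
    hu.upperSemicontinuousOn fun _ _ h => sub_le_sub_right h c
  frequently_lt x hx S hS t ht :=
    (hu.frequently_lt x hx S hS (t + c) (lt_sub_iff_add_lt.1 ht)).mono fun _ hy =>
      lt_sub_iff_add_lt.2 hy
  locallyIntegrableOn :=
    hu.locallyIntegrableOn.sub ((locallyIntegrable_const c).locallyIntegrableOn Ω)
  isWeakSubsolution := (isWeakSubsolution_congr_add_const ha hu.locallyIntegrableOn
    (.of_forall fun _ _ => sub_eq_add_neg _ _)).2 hu.isWeakSubsolution

lemma IsSubsolution.congr (hu : IsSubsolution μ B a Ω u) (ha : IsEllipticCoeff B a)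
    (hΩ : IsOpen Ω) (h : Set.EqOn v u Ω) : IsSubsolution μ B a Ω v where
  upperSemicontinuousOn x hx := (hu.upperSemicontinuousOn x hx).congr_of_eventuallyEq hx
    (eventually_mem_nhdsWithin.mono fun y hy => by simp only [h hy, implies_true])
  frequently_lt x hx S hS t ht := by
    have hΩx : ∀ᶠ y in 𝓝[S] x, y ∈ Ω := nhdsWithin_le_nhds (hΩ.mem_nhds hx)
    refine ((hu.frequently_lt x hx S hS t (h hx ▸ ht)).and_eventually hΩx).mono fun y hy => ?_
    exact (h hy.2).symm ▸ hy.1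
  locallyIntegrableOn x hx := by
    obtain ⟨N, hN, hui⟩ := hu.locallyIntegrableOn x hx
    refine ⟨N ∩ Ω, inter_mem hN self_mem_nhdsWithin,
      (hui.mono_set Set.inter_subset_left).congr ?_⟩
    exact ae_restrict_of_ae_restrict_of_subset Set.inter_subset_right <|
      (ae_restrict_mem hΩ.measurableSet).mono fun _ hy => (h hy).symm
  isWeakSubsolution := (isWeakSubsolution_congr_add_const ha hu.locallyIntegrableOn (c := 0)
    (.of_forall fun x hx => by rw [h hx, add_zero])).2 hu.isWeakSubsolution

lemma IsSubsolution.max (hu : IsSubsolution μ B a Ω u) (hv : IsSubsolution μ B a Ω v)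
    (ha : IsEllipticCoeff B a) (hΩ : IsOpen Ω) :
    IsSubsolution μ B a Ω fun x => max (u x) (v x) where
  upperSemicontinuousOn := hu.upperSemicontinuousOn.sup hv.upperSemicontinuousOn
  frequently_lt x hx S hS t ht := (lt_max_iff.1 ht).elim
    (fun h => (hu.frequently_lt x hx S hS t h).mono fun _ => lt_max_of_lt_left)
    fun h => (hv.frequently_lt x hx S hS t h).mono fun _ => lt_max_of_lt_right
  locallyIntegrableOn := locallyIntegrableOn_max hu.locallyIntegrableOn hv.locallyIntegrableOn
  isWeakSubsolution := hu.isWeakSubsolution.max hv.isWeakSubsolution ha hΩ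
    hu.locallyIntegrableOn hv.locallyIntegrableOn
    (fun _ hK hc => (hu.upperSemicontinuousOn.mono hK).bddAbove_of_isCompact hc)
    fun _ hK hc => (hv.upperSemicontinuousOn.mono hK).bddAbove_of_isCompact hc

lemma IsSubsolution.piecewise_max [∀ x, Decidable (x ∈ Ω')]
    (hu : IsSubsolution μ B a Ω' u) (hρ : IsSubsolution μ B a Ω ρ)
    (ha : IsEllipticCoeff B a) (hΩ : IsOpen Ω) (hΩ' : IsOpen Ω') (hsub : Ω' ⊆ Ω)
    (hK : IsClosed K) (hKΩ' : K ⊆ Ω') (hle : ∀ x ∈ Ω' \ K, u x ≤ ρ x) :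
    IsSubsolution μ B a Ω (Ω'.piecewise (fun x => Max.max (u x) (ρ x)) ρ) := by
  have hcover : Ω' ∪ Ω \ K = Ω := (Set.union_subset hsub Set.sdiff_subset).antisymm fun x hx =>
    (em (x ∈ K)).imp (hKΩ' ·) (⟨hx, ·⟩)
  rw [← hcover]
  refine IsSubsolution.union ?_ ?_ (fun i j => (ha.contDiff i j).continuous) hΩ'
    (hΩ.sdiff hK)
  · exact (hu.max (hρ.mono hsub) ha hΩ').congr ha hΩ' (Set.piecewise_eqOn ..)
  · refine (hρ.mono Set.sdiff_subset).congr ha (hΩ.sdiff hK) fun x hx => ?_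
    by_cases hx' : x ∈ Ω'
    · rw [Set.piecewise_eq_of_mem _ _ _ hx', max_eq_right (hle x ⟨hx', hx.2⟩)]
    · rw [Set.piecewise_eq_of_notMem _ _ _ hx']

end Subsolution

section AlphaForm

variable {n : ℕ}

/-- The directions `∂/∂x_j` and `∂/∂y_j` of `ℂⁿ`, indexed by `(j, 0)` and `(j, 1)`. -/
noncomputable def realDirection (i : Fin n × Fin 2) : Cn n := Pi.single i.1 (basisOneI i.2)

/-- The coefficients of `alphaOpR A` along `realDirection`. With `ω = (1, I)` one has
`2 ∂/∂z_j = ∑ c, conj (ω c) ∂_(j,c)` and `2 ∂/∂z̄_k = ∑ d, ω d ∂_(k,d)`, whence the formula. -/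
noncomputable def AlphaForm.realCoeff (A : AlphaForm n) (i j : Fin n × Fin 2) (z : Cn n) : ℝ :=
  (A.coeff i.1 j.1 z * (starRingEnd ℂ (basisOneI i.2) * basisOneI j.2)).re / 4

lemma wdz_eq_sum (j : Fin n) (f : Cn n → ℂ) (z : Cn n) :
    wdz j f z =
      (∑ c, starRingEnd ℂ (basisOneI c) * fderiv ℝ f z (realDirection (j, c))) / 2 := by
  simp [wdz, realDirection, Fin.sum_univ_two, sub_eq_add_neg]

lemma wdzbar_eq_sum (j : Fin n) (f : Cn n → ℂ) (z : Cn n) :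
    wdzbar j f z = (∑ c, basisOneI c * fderiv ℝ f z (realDirection (j, c))) / 2 := by
  simp [wdzbar, realDirection, Fin.sum_univ_two]

lemma sum_sum_prod {κ κ' M : Type*} [Fintype κ] [Fintype κ'] [AddCommMonoid M]
    (f : κ × κ' → κ × κ' → M) :
    ∑ i, ∑ j, f i j = ∑ j, ∑ k, ∑ c, ∑ d, f (j, c) (k, d) := by
  simp only [Fintype.sum_prod_type]
  exact Finset.sum_congr rfl fun j _ => Finset.sum_comm

lemma AlphaForm.divergence_realCoeff (A : AlphaForm n) (j : Fin n × Fin 2) (z : Cn n) :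
    divergence realDirection (fun w i => A.realCoeff i j w) z = 0 := by
  have hderiv (i : Fin n × Fin 2) (v : Cn n) : fderiv ℝ (A.realCoeff i j) z v =
      (fderiv ℝ (A.coeff i.1 j.1) z v *
        (starRingEnd ℂ (basisOneI i.2) * basisOneI j.2)).re / 4 := by
    have hA := ((A.contDiff i.1 j.1).differentiable one_ne_zero z).hasFDerivAt
    have h := (reCLM.hasFDerivAt.comp z
      (hA.mul_const (starRingEnd ℂ (basisOneI i.2) * basisOneI j.2))).mul_const (4⁻¹ : ℝ)
    rw [show A.realCoeff i j = _ from funext fun w => div_eq_mul_inv _ _]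
    refine (congrArg (· v) h.fderiv).trans ?_
    simp [div_eq_inv_mul, mul_comm]
  calc divergence realDirection (fun w i => A.realCoeff i j w) z
      = (∑ i : Fin n, wdz i (A.coeff i j.1) z * (basisOneI j.2 / 2)).re := by
        simp only [divergence, hderiv, Fintype.sum_prod_type, wdz_eq_sum, re_sum]
        refine Finset.sum_congr rfl fun i _ => ?_
        simp only [Fin.sum_univ_two, ← add_div, ← add_re, ← div_ofNat_re]
        congr 1
        ring
    _ = 0 := by rw [← Finset.sum_mul, A.closed, zero_mul, zero_re]

lemma AlphaForm.sum_realCoeff_mul (A : AlphaForm n) (z : Cn n) (ξ : Fin n × Fin 2 → ℝ) :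
    ∑ i, ∑ j, A.realCoeff i j z * ξ i * ξ j =
      (∑ j, ∑ k, A.coeff j k z * (∑ c, starRingEnd ℂ (basisOneI c) * ξ (j, c)) *
        starRingEnd ℂ (∑ d, starRingEnd ℂ (basisOneI d) * ξ (k, d))).re / 4 := by
  rw [sum_sum_prod, re_sum, Finset.sum_div]
  refine Finset.sum_congr rfl fun j _ => ?_
  rw [re_sum, Finset.sum_div]
  refine Finset.sum_congr rfl fun k _ => ?_
  simp [realCoeff, Fin.sum_univ_two]
  ring

lemma sum_conj_basisOneI_mul_eq_zero {x : Fin 2 → ℝ}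
    (h : ∑ c, starRingEnd ℂ (basisOneI c) * x c = 0) : x = 0 := by
  funext c
  fin_cases c
  · simpa [Fin.sum_univ_two] using congrArg re h
  · simpa [Fin.sum_univ_two] using congrArg im h

lemma AlphaForm.isEllipticCoeff (A : AlphaForm n) :
    IsEllipticCoeff realDirection A.realCoeff where
  contDiff i j := (reCLM.contDiff.comp ((A.contDiff i.1 j.1).mul contDiff_const)).div_const 4
  symm i j z := by
    simp only [realCoeff]
    rw [← conj_re, A.hermitian j.1 i.1]
    simp [mul_comm]
  pos z ξ hξ := by
    rw [A.sum_realCoeff_mul]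
    refine div_pos (A.strictlyPositive z _ fun h => hξ (funext fun i => ?_)) four_pos
    exact congrFun (sum_conj_basisOneI_mul_eq_zero (congrFun h i.1)) i.2
  divergence_eq_zero := A.divergence_realCoeff

lemma wdzbar_wdz_ofReal {χ : Cn n → ℝ} (hχ : ContDiff ℝ 2 χ) (j k : Fin n) (z : Cn n) :
    wdzbar k (wdz j fun w => (χ w : ℂ)) z =
      (∑ c, ∑ d, starRingEnd ℂ (basisOneI c) * basisOneI d *
        fderiv ℝ (fderiv ℝ χ) z (realDirection (j, c)) (realDirection (k, d))) / 4 := by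
  have hofReal {f : Cn n → ℝ} (hf : ContDiff ℝ 1 f) (z : Cn n) :
      HasFDerivAt (fun w => (f w : ℂ)) (ofRealCLM ∘L fderiv ℝ f z) z :=
    ofRealCLM.hasFDerivAt.comp z (hf.differentiable one_ne_zero z).hasFDerivAt
  have hwdz : wdz j (fun w => (χ w : ℂ)) = fun w =>
      (∑ c, starRingEnd ℂ (basisOneI c) * (fderiv ℝ χ w (realDirection (j, c)) : ℝ)) / 2 :=
    funext fun w => by
      simp only [wdz_eq_sum, (hofReal (hχ.of_le one_le_two) w).fderiv]
      rfl
  have hfderiv (v : Cn n) : fderiv ℝ (wdz j fun w => (χ w : ℂ)) z v =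
      (∑ c, starRingEnd ℂ (basisOneI c) *
        (fderiv ℝ (fderiv ℝ χ) z v (realDirection (j, c)) : ℝ)) / 2 := by
    have h := (HasFDerivAt.fun_sum (u := Finset.univ) fun c _ =>
      (hofReal (contDiff_fderiv_apply (m := 1) hχ (realDirection (j, c))) z).const_mul
        (starRingEnd ℂ (basisOneI c))).mul_const (2⁻¹ : ℂ)
    simp only [hwdz, div_eq_mul_inv, h.fderiv]
    simp [fderiv_fderiv_apply hχ, mul_comm]
    ring
  have hsymm : IsSymmSndFDerivAt ℝ χ z := hχ.contDiffAt.isSymmSndFDerivAt (by simp)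
  simp only [wdzbar_eq_sum, hfderiv, Fin.sum_univ_two, hsymm.eq (realDirection (j, _))]
  ring

lemma AlphaForm.alphaOpR_eq_secondOrderOp (A : AlphaForm n) {χ : Cn n → ℝ}
    (hχ : ContDiff ℝ 2 χ) (z : Cn n) :
    alphaOpR A χ z = secondOrderOp realDirection A.realCoeff χ z := by
  simp only [alphaOpR, alphaOp, secondOrderOp, sum_sum_prod, re_sum, wdzbar_wdz_ofReal hχ]
  refine Finset.sum_congr rfl fun j _ => Finset.sum_congr rfl fun k _ => ?_
  rw [mul_div_assoc', div_ofNat_re, Finset.mul_sum, re_sum, Finset.sum_div]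
  refine Finset.sum_congr rfl fun c _ => ?_
  rw [Finset.mul_sum, re_sum, Finset.sum_div]
  refine Finset.sum_congr rfl fun d _ => ?_
  rw [← mul_assoc, re_mul_ofReal, AlphaForm.realCoeff]
  ring

lemma IsTestFunction.setIntegral_mul_alphaOpR {D : Set (Cn n)} {φ : Cn n → ℝ}
    (hφ : IsTestFunction D φ) (A : AlphaForm n) (u : Cn n → ℝ) :
    ∫ z in D, u z * alphaOpR A φ z = ∫ z, u z * secondOrderOp realDirection A.realCoeff φ z := by
  simp only [A.alphaOpR_eq_secondOrderOp hφ.contDiff_two]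
  refine setIntegral_eq_integral_of_forall_compl_eq_zero fun z hz => ?_
  rw [secondOrderOp_eq_zero_of_notMem_tsupport fun h => hz (hφ.tsupport_subset h), mul_zero]

lemma limsup_coe_eq_coe_iff {X : Type*} {f : X → ℝ} {F : Filter X} {t : ℝ} :
    limsup (fun x => (f x : EReal)) F = t ↔
      (∀ c > t, ∀ᶠ x in F, f x < c) ∧ ∀ c < t, ∃ᶠ x in F, c < f x := by
  rw [le_antisymm_iff, limsup_le_iff, le_limsup_iff, EReal.forall, EReal.forall]
  simpa using fun _ h => ⟨fun hF => by simpa [hF] using h (t - 1) (sub_one_lt t)⟩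

lemma isAlphaSubharmonic_iff_isSubsolution (A : AlphaForm n) {D : Set (Cn n)} (hD : IsOpen D)
    {u : Cn n → ℝ} :
    IsAlphaSubharmonic A D u ↔ IsSubsolution volume realDirection A.realCoeff D u := by
  have husc : UpperSemicontinuousOn (fun z => (u z : EReal)) D ↔ UpperSemicontinuousOn u D := by
    refine ⟨fun h z hz c hc => ?_, fun h =>
      continuous_coe_real_ereal.comp_upperSemicontinuousOn h EReal.coe_strictMono.monotone⟩
    exact (h z hz c (EReal.coe_lt_coe hc)).mono fun _ => EReal.coe_lt_coe_iff.1
  have hweak : (∀ φ : Cn n → ℝ, ContDiff ℝ (⊤ : ℕ∞) φ → HasCompactSupport φ → tsupport φ ⊆ D →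
      (∀ z, 0 ≤ φ z) → 0 ≤ ∫ z in D, u z * alphaOpR A φ z) ↔
      IsWeakSubsolution volume realDirection A.realCoeff D u :=
    ⟨fun h φ hφ => (h φ hφ.1 hφ.2 hφ.3 hφ.4).trans_eq (hφ.setIntegral_mul_alphaOpR A u),
      fun h φ h₁ h₂ h₃ h₄ => (h φ ⟨h₁, h₂, h₃, h₄⟩).trans_eq
        (IsTestFunction.setIntegral_mul_alphaOpR ⟨h₁, h₂, h₃, h₄⟩ A u).symm⟩
  simp only [IsAlphaSubharmonic, IsAlphaSubharmonicE, husc, limsup_coe_eq_coe_iff,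
    EReal.toReal_coe, hweak]
  refine ⟨fun ⟨_, h₁, h₂, h₃, h₄⟩ => ⟨h₁, fun z hz S hS => (h₂ z hz S hS).2, h₃, h₄⟩,
    fun ⟨h₁, h₂, h₃, h₄⟩ => ⟨fun _ _ => EReal.coe_ne_top _, h₁, fun z hz S hS =>
      ⟨fun c hc => ?_, h₂ z hz S hS⟩, h₃, h₄⟩⟩
  exact nhdsWithin_le_nhds (hD.nhdsWithin_eq hz ▸ h₁ z hz c hc)

end AlphaForm

section IncreasingDomains

lemma isCoboundedUnder_le_nhds {X : Type*} [TopologicalSpace X] (f : X → ℝ) (x : X) :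
    (𝓝 x).IsCoboundedUnder (· ≤ ·) f :=
  .of_frequently_ge (a := f x) fun h => h.self_of_nhds le_rfl

lemma limsup_nhds_le_add {X : Type*} [TopologicalSpace X] {f g : X → ℝ} {x : X} {ε : ℝ}
    (h : ∀ᶠ y in 𝓝 x, f y ≤ g y + ε) (hg : (𝓝 x).IsBoundedUnder (· ≤ ·) g) :
    limsup f (𝓝 x) ≤ limsup g (𝓝 x) + ε := by
  obtain ⟨b, hb⟩ := hg
  have hbdd : (𝓝 x).IsBoundedUnder (· ≤ ·) fun y => g y + ε :=
    ⟨b + ε, (eventually_map.1 hb).mono fun _ hy => add_le_add_left hy ε⟩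
  rw [← limsup_add_const _ g ε ⟨b, hb⟩ (isCoboundedUnder_le_nhds g x)]
  exact limsup_le_limsup h (isCoboundedUnder_le_nhds f x) hbdd

lemma tendsto_limsup_nhds_of_tendstoUniformlyOnFilter {X J : Type*} [TopologicalSpace X]
    {F : J → X → ℝ} {g : X → ℝ} {l : Filter J} {x : X}
    (h : TendstoUniformlyOnFilter F g l (𝓝 x)) (hg : (𝓝 x).IsBoundedUnder (· ≤ ·) g) :
    Tendsto (fun j => limsup (F j) (𝓝 x)) l (𝓝 (limsup g (𝓝 x))) := by
  rw [Metric.tendsto_nhds]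
  intro ε hε
  have hclose := (Metric.tendstoUniformlyOnFilter_iff.1 h (ε / 2) (half_pos hε)).curry
  filter_upwards [hclose] with j hj
  have hle : ∀ᶠ y in 𝓝 x, F j y ≤ g y + ε / 2 :=
    hj.mono fun y hy => by linarith [(abs_lt.1 hy).1]
  have hge : ∀ᶠ y in 𝓝 x, g y ≤ F j y + ε / 2 :=
    hj.mono fun y hy => by linarith [(abs_lt.1 hy).2]
  obtain ⟨b, hb⟩ := hg
  have hF : (𝓝 x).IsBoundedUnder (· ≤ ·) (F j) :=
    ⟨b + ε / 2, (hle.and hb).mono fun y hy => hy.1.trans (by gcongr; exact hy.2)⟩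
  rw [Real.dist_eq, abs_lt]
  constructor <;> linarith [limsup_nhds_le_add hle ⟨b, hb⟩, limsup_nhds_le_add hge hF]

lemma exists_pos_forall_mul_le_of_neg {X : Type*} [TopologicalSpace X] {K : Set X} {f : X → ℝ}
    (hK : IsCompact K) (hf : UpperSemicontinuousOn f K) (hneg : ∀ x ∈ K, f x < 0) (b : ℝ) :
    ∃ C > 0, ∀ x ∈ K, C * f x ≤ b := by
  rcases K.eq_empty_or_nonempty with rfl | hne
  · exact ⟨1, one_pos, by simp⟩
  obtain ⟨m, hm, hmax⟩ := hf.exists_isMaxOn hne hK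
  have hbot : Tendsto (fun C => C * f m) atTop atBot :=
    tendsto_id.atTop_mul_const_of_neg (hneg m hm)
  obtain ⟨C, hCm, hC⟩ := ((hbot.eventually_le_atBot b).and (eventually_gt_atTop 0)).exists
  exact ⟨C, hC, fun x hx => (mul_le_mul_of_nonneg_left (hmax hx) hC.le).trans hCm⟩

lemma exists_isCompact_subset_forall_lt_of_tendsto_frontier {X : Type*} [PseudoMetricSpace X]
    [ProperSpace X] {D : Set X} {f : X → ℝ} {s t : ℝ} (hD : IsOpen D)
    (hb : Bornology.IsBounded D) (hf : ∀ ζ ∈ frontier D, Tendsto f (𝓝[D] ζ) (𝓝 t)) (hs : s < t) :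
    ∃ K, IsCompact K ∧ K ⊆ D ∧ ∀ x ∈ D \ K, s < f x := by
  set O := interior {x | x ∈ D → s < f x}
  have hO : frontier D ⊆ O := fun ζ hζ =>
    mem_interior_iff_mem_nhds.2 (eventually_nhdsWithin_iff.1 ((hf ζ hζ).eventually_const_lt hs))
  refine ⟨closure D \ O, hb.isCompact_closure.diff isOpen_interior, fun x hx => ?_,
    fun x hx => ?_⟩
  · by_contra hxD
    exact hx.2 (hO (hD.frontier_eq ▸ ⟨hx.1, hxD⟩))
  · by_contra hfx
    exact hx.2 ⟨subset_closure hx.1, fun hxO => hfx (interior_subset hxO hx.1)⟩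

variable {n : ℕ} {A : AlphaForm n} {D G E K : Set (Cn n)} {ψ u v : Cn n → ℝ} {z : Cn n} {ε : ℝ}

lemma mem_Uclass_of_subset (hu : u ∈ Uclass A E D ψ) (hD : IsOpen D) (hG : IsOpen G)
    (h : G ⊆ D) : u ∈ Uclass A E G ψ :=
  ⟨(isAlphaSubharmonic_iff_isSubsolution A hG).2
    (((isAlphaSubharmonic_iff_isSubsolution A hD).1 hu.1).mono h), hu.2.1,
    fun z hz => hu.2.2 z (h hz)⟩

lemma omegaW_nonpos (hz : z ∈ D) : omegaW A E D ψ z ≤ 0 :=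
  Real.sSup_nonpos (Set.forall_mem_image.2 fun _ hu => (hu.2.2 z hz).le)

lemma le_omegaW (hu : u ∈ Uclass A E D ψ) (hz : z ∈ D) : u z ≤ omegaW A E D ψ z :=
  le_csSup ⟨0, Set.forall_mem_image.2 fun _ hu => (hu.2.2 z hz).le⟩ ⟨u, hu, rfl⟩

lemma omegaW_le_omegaW_of_subset (hne : (Uclass A E D ψ).Nonempty) (hD : IsOpen D)
    (hG : IsOpen G) (h : G ⊆ D) (hz : z ∈ G) : omegaW A E D ψ z ≤ omegaW A E G ψ z :=
  csSup_le (hne.image _) <| Set.forall_mem_image.2 fun _ hu =>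
    le_omegaW (mem_Uclass_of_subset hu hD hG h) hz

lemma piecewise_max_mem_Uclass [∀ z, Decidable (z ∈ G)] (hu : u ∈ Uclass A E G ψ)
    (hv : v ∈ Uclass A E D ψ) (hD : IsOpen D) (hG : IsOpen G) (hGD : G ⊆ D) (hEG : E ⊆ G)
    (hK : IsClosed K) (hKG : K ⊆ G) (hε : 0 ≤ ε) (hle : ∀ z ∈ G \ K, -ε ≤ v z) :
    G.piecewise (fun z => max (u z - ε) (v z)) v ∈ Uclass A E D ψ := by
  have hA := A.isEllipticCoeff
  refine ⟨(isAlphaSubharmonic_iff_isSubsolution A hD).2 <|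
    (((isAlphaSubharmonic_iff_isSubsolution A hG).1 hu.1).sub_const hA ε).piecewise_max
      ((isAlphaSubharmonic_iff_isSubsolution A hD).1 hv.1) hA hD hG hGD hK hKG fun z hz => ?_,
    fun z hz => ?_, fun z hz => ?_⟩
  · linarith [hu.2.2 z hz.1, hle z hz]
  · rw [Set.piecewise_eq_of_mem _ _ _ (hEG hz)]
    exact max_le ((sub_le_self _ hε).trans (hu.2.1 z hz)) (hv.2.1 z hz)
  · by_cases hzG : z ∈ G
    · rw [Set.piecewise_eq_of_mem _ _ _ hzG]
      exact max_lt ((sub_le_self _ hε).trans_lt (hu.2.2 z hzG)) (hv.2.2 z hz)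
    · rw [Set.piecewise_eq_of_notMem _ _ _ hzG]
      exact hv.2.2 z hz

lemma omegaW_le_omegaW_add (hv : v ∈ Uclass A E D ψ) (hD : IsOpen D) (hG : IsOpen G)
    (hGD : G ⊆ D) (hEG : E ⊆ G) (hK : IsClosed K) (hKG : K ⊆ G) (hε : 0 ≤ ε)
    (hle : ∀ z ∈ G \ K, -ε ≤ v z) (hz : z ∈ G) :
    omegaW A E G ψ z ≤ omegaW A E D ψ z + ε := by
  classical
  refine csSup_le ⟨v z, v, mem_Uclass_of_subset hv hD hG hGD, rfl⟩
    (Set.forall_mem_image.2 fun u hu => ?_)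
  have h := le_omegaW (piecewise_max_mem_Uclass hu hv hD hG hGD hEG hK hKG hε hle) (hGD hz)
  rw [Set.piecewise_eq_of_mem _ _ _ hz] at h
  exact sub_le_iff_le_add.1 ((le_max_left _ _).trans h)

lemma IsAlphaRegularDomain.exists_mem_Uclass_tendsto_zero (hD : IsAlphaRegularDomain A D)
    (hEc : IsCompact (closure E)) (hE : closure E ⊆ D) (hψ : BddBelow (ψ '' E)) :
    ∃ v ∈ Uclass A E D ψ, ∀ ζ ∈ frontier D, Tendsto v (𝓝[D] ζ) (𝓝 0) := by
  obtain ⟨hDo, -, -, ρ, hρ, hρneg, hρlim⟩ := hD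
  obtain ⟨b, hb⟩ := hψ
  replace hρ := (isAlphaSubharmonic_iff_isSubsolution A hDo).1 hρ
  obtain ⟨C, hC, hCb⟩ := exists_pos_forall_mul_le_of_neg hEc
    (hρ.upperSemicontinuousOn.mono hE) (fun z hz => hρneg z (hE hz)) b
  refine ⟨fun z => C * ρ z, ⟨(isAlphaSubharmonic_iff_isSubsolution A hDo).2 (hρ.const_mul hC),
    fun z hz => (hCb z (subset_closure hz)).trans (hb ⟨z, hz, rfl⟩),
    fun z hz => mul_neg_of_pos_of_neg hC (hρneg z hz)⟩, fun ζ hζ => ?_⟩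
  simpa only [mul_zero] using (hρlim ζ hζ).const_mul C

lemma IsAlphaRegularDomain.tendstoLocallyUniformlyOn_omegaW {Dseq : ℕ → Set (Cn n)}
    (hD : IsAlphaRegularDomain A D) (hDj : ∀ j, IsOpen (Dseq j)) (hmono : Monotone Dseq)
    (hUnion : D = ⋃ j, Dseq j) (hEc : IsCompact (closure E)) (hE : closure E ⊆ Dseq 0)
    (hψ : BddBelow (ψ '' E)) :
    TendstoLocallyUniformlyOn (fun j => omegaW A E (Dseq j) ψ) (omegaW A E D ψ) atTop D := by
  have hsub (j : ℕ) : Dseq j ⊆ D := hUnion ▸ Set.subset_iUnion Dseq j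
  have hE' (j : ℕ) : E ⊆ Dseq j := subset_closure.trans (hE.trans (hmono (Nat.zero_le j)))
  obtain ⟨v, hv, hvlim⟩ := hD.exists_mem_Uclass_tendsto_zero hEc (hE.trans (hsub 0)) hψ
  obtain ⟨hDo, -, hDb, -⟩ := hD
  rw [Metric.tendstoLocallyUniformlyOn_iff]
  intro ε hε z hz
  obtain ⟨K, hK, hKD, hKv⟩ :=
    exists_isCompact_subset_forall_lt_of_tendsto_frontier hDo hDb hvlim
      (neg_neg_of_pos (half_pos hε))
  obtain ⟨i, hKi⟩ := hK.elim_directed_cover Dseq hDj (hUnion ▸ hKD) hmono.directed_le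
  obtain ⟨k, hzk⟩ := Set.mem_iUnion.1 (hUnion ▸ hz)
  refine ⟨Dseq k, mem_nhdsWithin_of_mem_nhds ((hDj k).mem_nhds hzk), ?_⟩
  filter_upwards [eventually_ge_atTop i, eventually_ge_atTop k] with j hij hkj w hw
  have hwj : w ∈ Dseq j := hmono hkj hw
  have hlower := omegaW_le_omegaW_of_subset ⟨v, hv⟩ hDo (hDj j) (hsub j) hwj
  have hupper := omegaW_le_omegaW_add hv hDo (hDj j) (hsub j) (hE' j) hK.isClosed
    (hKi.trans (hmono hij)) (half_pos hε).le
    (fun x hx => (hKv x ⟨hsub j hx.1, hx.2⟩).le) hwj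
  rw [Real.dist_eq, abs_lt]
  constructor <;> linarith

end IncreasingDomains

theorem weighted_measure_increasing_domains_general {n : ℕ} (A : AlphaForm n) (D : Set (Cn n))
    (Dseq : ℕ → Set (Cn n)) (hD : IsAlphaRegularDomain A D) (hDj : ∀ j, IsOpen (Dseq j))
    (hmono : Monotone Dseq) (hUnion : D = ⋃ j, Dseq j) (E : Set (Cn n))
    (hEc : IsCompact (closure E)) (hE : closure E ⊆ Dseq 0) (ψ : Cn n → ℝ)
    (hψ : BddBelow (ψ '' E)) :
    ∀ z ∈ D, Tendsto (fun j => omegaWStar A E (Dseq j) ψ z) atTop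
      (𝓝 (omegaWStar A E D ψ z)) := by
  intro z hz
  have hDo : IsOpen D := hD.1
  have hloc := hD.tendstoLocallyUniformlyOn_omegaW hDj hmono hUnion hEc hE hψ
  refine tendsto_limsup_nhds_of_tendstoUniformlyOnFilter ?_
    ⟨0, (hDo.eventually_mem hz).mono fun _ hw => omegaW_nonpos hw⟩
  exact tendstoUniformlyOnFilter_iff_tendsto.2
    (hDo.tendstoLocallyUniformlyOn_iff_forall_tendsto.1 hloc z hz)

/-- For an increasing sequence of `α`-regular domains `D_j` exhausting
the bounded `α`-regular domain `D`, and `E ⋐ D 0`,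
`ω*_α(z,E,D_j,ψ) → ω*_α(z,E,D,ψ)` for every `z ∈ D`. -/
theorem weighted_measure_increasing_domains {n : ℕ} (A : AlphaForm n) (D : Set (Cn n))
    (Dseq : ℕ → Set (Cn n)) (hD : IsAlphaRegularDomain A D)
    (hDj : ∀ j, IsAlphaRegularDomain A (Dseq j)) (hmono : ∀ j, Dseq j ⊆ Dseq (j + 1))
    (hUnion : D = ⋃ j, Dseq j) (E : Set (Cn n)) (hEc : IsCompact (closure E))
    (hE : closure E ⊆ Dseq 0) (ψ : Cn n → ℝ)
    (hbd : ∃ C : ℝ, ∀ z ∈ E, |ψ z| ≤ C) (hsup : ∃ c < (0 : ℝ), ∀ z ∈ E, ψ z ≤ c) :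
    ∀ z ∈ D, Filter.Tendsto (fun j => omegaWStar A E (Dseq j) ψ z) atTop
      (𝓝 (omegaWStar A E D ψ z)) := by
  obtain ⟨C, hC⟩ := hbd
  exact weighted_measure_increasing_domains_general A D Dseq hD (fun j => (hDj j).1)
    (monotone_nat_of_le_succ hmono) hUnion E hEc hE ψ
    ⟨-C, Set.forall_mem_image.2 fun z hz => neg_le_of_abs_le (hC z hz)⟩
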